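/- arXiv:2309.00522 — 5 statements merged into one kernel-verified Lean document; each statement's English description precedes it below -/
import Mathlib

section
/- There is an absolute constant C > 0 such that for all real τ₁, τ₂, τ₃ with τ₁ + τ₂ + τ₃ = 0 one has G(τ₁, τ₂, τ₃) · (1 + |τ₁ − τ₂|)(1 + |τ₁ − τ₃|)(1 + |τ₂ − τ₃|) ≤ C · (1 + max(|τ₁|, |τ₂|, |τ₃|))². -/
/-!
Only the three pairwise gaps matter. Write `x, y, z` for the quantities `1 + |τᵢ - τⱼ|`; each lies in
`[1, K]` with `K = 2 (1 + max |τᵢ|)`. The maximum and the minimum are each attained at some `τₖ`, and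
then the corresponding product in `G` is `(x y)^(-1/2)`, where `x, y` are the two gaps involving `τₖ`
(the factor `j = k` is `1`). Multiplying by `x y z` leaves `√(x y) · z ≤ K²`. Hence the left-hand side
is at most `2 K² = 8 (1 + max |τᵢ|)²`.
-/

/-- The function `G(a)` from the paper. -/
noncomputable def Gfun (n : ℕ) (a : Fin n → ℝ) : ℝ :=
  (∏ j, (1 + (⨆ i, a i) - a j) ^ (-(1 / 2 : ℝ))) +
  (∏ j, (1 + |(⨅ i, a i) - a j|) ^ (-(1 / 2 : ℝ)))

lemma rpow_neg_half_mul_le {x y z K : ℝ} (hx : 1 ≤ x) (hy : 1 ≤ y) (hz : 1 ≤ z)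
    (hxK : x ≤ K) (hyK : y ≤ K) (hzK : z ≤ K) :
    x ^ (-(1 / 2 : ℝ)) * y ^ (-(1 / 2 : ℝ)) * (x * y * z) ≤ K ^ 2 := by
  have key : ∀ t : ℝ, 1 ≤ t → t ^ (-(1 / 2 : ℝ)) * t = √t := by
    intro t ht
    have ht0 : 0 < t := by linarith
    rw [Real.sqrt_eq_rpow, ← Real.rpow_add_one ht0.ne']
    norm_num
  have h : x ^ (-(1 / 2 : ℝ)) * y ^ (-(1 / 2 : ℝ)) * (x * y * z) = √x * √y * z := by
    rw [← key x hx, ← key y hy]; ring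
  have hK : 0 ≤ K := by linarith
  rw [h]
  calc √x * √y * z ≤ √K * √K * K := by gcongr
    _ = K ^ 2 := by rw [Real.mul_self_sqrt hK]; ring

/-- The contribution to `G` of an extremal value, attained at the index `k`. -/
lemma prod_gap_mul_le {a b c K : ℝ} (hab : 1 + |a - b| ≤ K) (hac : 1 + |a - c| ≤ K)
    (hbc : 1 + |b - c| ≤ K) (k : Fin 3) :
    (∏ j, (1 + |![a, b, c] k - ![a, b, c] j|) ^ (-(1 / 2 : ℝ))) *
      ((1 + |a - b|) * (1 + |a - c|) * (1 + |b - c|)) ≤ K ^ 2 := by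
  have h1 : 1 ≤ 1 + |a - b| := by linarith [abs_nonneg (a - b)]
  have h2 : 1 ≤ 1 + |a - c| := by linarith [abs_nonneg (a - c)]
  have h3 : 1 ≤ 1 + |b - c| := by linarith [abs_nonneg (b - c)]
  rw [Fin.prod_univ_three]
  fin_cases k
  · have := rpow_neg_half_mul_le h1 h2 h3 hab hac hbc
    simpa using this
  · have := rpow_neg_half_mul_le h1 h3 h2 hab hbc hac
    rw [mul_right_comm (1 + |a - b|)] at this
    simpa [abs_sub_comm b a] using this
  · have := rpow_neg_half_mul_le h2 h3 h1 hac hbc hab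
    rw [mul_comm _ (1 + |a - b|), ← mul_assoc (1 + |a - b|)] at this
    simpa [abs_sub_comm c a, abs_sub_comm c b] using this

theorem statement14 :
    ∃ C : ℝ, 0 < C ∧ ∀ τ₁ τ₂ τ₃ : ℝ, τ₁ + τ₂ + τ₃ = 0 →
      Gfun 3 ![τ₁, τ₂, τ₃] * ((1 + |τ₁ - τ₂|) * (1 + |τ₁ - τ₃|) * (1 + |τ₂ - τ₃|)) ≤
        C * (1 + max |τ₁| (max |τ₂| |τ₃|)) ^ 2 := by
  refine ⟨8, by norm_num, fun a b c _ => ?_⟩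
  set M := max |a| (max |b| |c|) with hM
  have ha : |a| ≤ M := le_max_left _ _
  have hb : |b| ≤ M := (le_max_left _ _).trans (le_max_right _ _)
  have hc : |c| ≤ M := (le_max_right _ _).trans (le_max_right _ _)
  have hab : 1 + |a - b| ≤ 2 * (1 + M) := by linarith [abs_sub a b]
  have hac : 1 + |a - c| ≤ 2 * (1 + M) := by linarith [abs_sub a c]
  have hbc : 1 + |b - c| ≤ 2 * (1 + M) := by linarith [abs_sub b c]
  obtain ⟨k, hk⟩ := exists_eq_ciSup_of_finite (f := ![a, b, c])
  obtain ⟨l, hl⟩ := exists_eq_ciInf_of_finite (f := ![a, b, c])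
  have hmax : ∀ j, ![a, b, c] k - ![a, b, c] j = |![a, b, c] k - ![a, b, c] j| := by
    intro j
    rw [abs_of_nonneg]
    rw [hk, sub_nonneg]
    exact le_ciSup (Set.finite_range _).bddAbove j
  have hG : Gfun 3 ![a, b, c] =
      (∏ j, (1 + |![a, b, c] k - ![a, b, c] j|) ^ (-(1 / 2 : ℝ))) +
      (∏ j, (1 + |![a, b, c] l - ![a, b, c] j|) ^ (-(1 / 2 : ℝ))) := by
    unfold Gfun
    rw [← hk, ← hl]
    congr 1
    refine Finset.prod_congr rfl fun j _ => ?_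
    rw [add_sub_assoc, hmax j, abs_abs]
  rw [hG, add_mul]
  have h1 := prod_gap_mul_le hab hac hbc k
  have h2 := prod_gap_mul_le hab hac hbc l
  linarith
end

section
/- For every real A ≥ 3 there exists C = C(A) > 0 such that for all 0 < δ < 1: ∫_{ℝ²} G(τ₁, τ₂, −τ₁−τ₂) · (1 + δ m(τ))^{−A} · (1 + m(τ))^{−2} · (1 + |τ₁ − τ₂|)(1 + |2τ₁ + τ₂|)(1 + |τ₁ + 2τ₂|) dτ₁ dτ₂ ≤ C · δ^{−2}, where m(τ) := max(|τ₁|, |τ₂|, |τ₁ + τ₂|). -/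
/-!
Write `d₁, d₂, d₃` for the pairwise distances of the three parameters and `M = 1 + m(τ)`. Each
factor `1 + dᵢ` is at most `2M`. In either summand of `G`, the extremal parameter `a k` contributes a
factor `1` (from `j = k`) and the two others contribute `(1 + d)^(-1/2)` for the two distances from
`a k`. Multiplying by `∏ (1 + dᵢ)` leaves two square roots and one full factor, at most `(2M)²`. Hence
`G · ∏ (1 + dᵢ) ≤ 8 M²`, which cancels `M^(-2)`, and the integrand is at most
`8 (1 + δ‖τ‖)^(-3)`. Since `3` exceeds the dimension `2`, this is integrable, and rescaling
`τ` by `δ` gives the factor `δ^(-2)`.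
-/


open MeasureTheory

lemma rpow_neg_half_mul_self_le {u M : ℝ} (hu : 1 ≤ u) (huM : u ≤ 2 * M) :
    u ^ (-(1 / 2 : ℝ)) * u ≤ √(2 * M) := by
  have h : u ^ (-(1 / 2 : ℝ)) * u = √u := by
    nth_rewrite 2 [← Real.rpow_one u]
    rw [← Real.rpow_add (by linarith), Real.sqrt_eq_rpow]
    norm_num
  rw [h]
  exact Real.sqrt_le_sqrt huM

lemma two_rpow_neg_half_mul_le {u v w M : ℝ} (hu : 1 ≤ u) (hv : 1 ≤ v) (hw : 1 ≤ w)
    (huM : u ≤ 2 * M) (hvM : v ≤ 2 * M) (hwM : w ≤ 2 * M) :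
    u ^ (-(1 / 2 : ℝ)) * v ^ (-(1 / 2 : ℝ)) * (u * v * w) ≤ 4 * M ^ 2 := by
  have h1 := rpow_neg_half_mul_self_le hu huM
  have h2 := rpow_neg_half_mul_self_le hv hvM
  have h0 : (0 : ℝ) ≤ 2 * M := by linarith
  calc u ^ (-(1 / 2 : ℝ)) * v ^ (-(1 / 2 : ℝ)) * (u * v * w)
      = (u ^ (-(1 / 2 : ℝ)) * u) * (v ^ (-(1 / 2 : ℝ)) * v) * w := by ring
    _ ≤ √(2 * M) * √(2 * M) * (2 * M) := by gcongr
    _ = 4 * M ^ 2 := by rw [Real.mul_self_sqrt h0]; ring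

/-- The bound for one summand of `G`, with the extremal parameter at an arbitrary index `k`. -/
lemma prod_rpow_neg_half_mul_le (a : Fin 3 → ℝ) (k : Fin 3) {M : ℝ}
    (h : ∀ i j, 1 + |a i - a j| ≤ 2 * M) :
    (∏ j, (1 + |a k - a j|) ^ (-(1 / 2 : ℝ))) *
      ((1 + |a 0 - a 1|) * (1 + |a 0 - a 2|) * (1 + |a 1 - a 2|)) ≤ 4 * M ^ 2 := by
  have g : ∀ i j, 1 ≤ 1 + |a i - a j| := fun i j => by
    have := abs_nonneg (a i - a j)
    linarith
  rw [Fin.prod_univ_three]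
  fin_cases k
  · have := two_rpow_neg_half_mul_le (g 0 1) (g 0 2) (g 1 2) (h 0 1) (h 0 2) (h 1 2)
    simpa using this
  · have := two_rpow_neg_half_mul_le (g 0 1) (g 1 2) (g 0 2) (h 0 1) (h 1 2) (h 0 2)
    rw [mul_right_comm (1 + |a 0 - a 1|)] at this
    simpa [abs_sub_comm (a 1) (a 0)] using this
  · have := two_rpow_neg_half_mul_le (g 0 2) (g 1 2) (g 0 1) (h 0 2) (h 1 2) (h 0 1)
    have e : (1 + |a 0 - a 2|) * (1 + |a 1 - a 2|) * (1 + |a 0 - a 1|) =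
      (1 + |a 0 - a 1|) * (1 + |a 0 - a 2|) * (1 + |a 1 - a 2|) := by ring
    rw [e] at this
    simpa [abs_sub_comm (a 2)] using this

lemma Gfun_mul_le (a : Fin 3 → ℝ) {M : ℝ} (h : ∀ i j, 1 + |a i - a j| ≤ 2 * M) :
    Gfun 3 a * ((1 + |a 0 - a 1|) * (1 + |a 0 - a 2|) * (1 + |a 1 - a 2|)) ≤ 8 * M ^ 2 := by
  obtain ⟨k, hk⟩ := exists_eq_ciSup_of_finite (f := a)
  obtain ⟨l, hl⟩ := exists_eq_ciInf_of_finite (f := a)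
  have hs : ∀ j, 1 + (⨆ i, a i) - a j = 1 + |a k - a j| := fun j => by
    have : a j ≤ a k := hk ▸ le_ciSup (Set.finite_range a).bddAbove j
    rw [← hk, abs_of_nonneg (by linarith)]
    ring
  unfold Gfun
  simp only [hs, ← hl]
  have h1 := prod_rpow_neg_half_mul_le a k h
  have h2 := prod_rpow_neg_half_mul_le a l h
  rw [add_mul]
  linarith

lemma integrand_le {A δ : ℝ} (hA : 3 ≤ A) (hδ : 0 < δ) (τ : ℝ × ℝ) :
    Gfun 3 ![τ.1, τ.2, -τ.1 - τ.2] *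
            (1 + δ * max |τ.1| (max |τ.2| |τ.1 + τ.2|)) ^ (-A) *
            (1 + max |τ.1| (max |τ.2| |τ.1 + τ.2|)) ^ (-(2 : ℝ)) *
            ((1 + |τ.1 - τ.2|) * (1 + |2 * τ.1 + τ.2|) * (1 + |τ.1 + 2 * τ.2|)) ≤
      8 * (1 + ‖δ • τ‖) ^ (-(3 : ℝ)) := by
  obtain ⟨x, y⟩ := τ
  simp only
  set m := max |x| (max |y| |x + y|) with hm
  have hx : |x| ≤ m := le_max_left _ _
  have hy : |y| ≤ m := (le_max_left _ _).trans (le_max_right _ _)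
  have hxy : |x + y| ≤ m := (le_max_right _ _).trans (le_max_right _ _)
  have hm0 : 0 ≤ m := (abs_nonneg x).trans hx
  have hG : Gfun 3 ![x, y, -x - y] *
      ((1 + |x - y|) * (1 + |2 * x + y|) * (1 + |x + 2 * y|)) ≤ 8 * (1 + m) ^ 2 := by
    have hz : |-x - y| ≤ m := by rwa [← abs_neg, show -(-x - y) = x + y by ring]
    have hb : ∀ i, |(![x, y, -x - y] : Fin 3 → ℝ) i| ≤ m := by
      intro i
      fin_cases i
      exacts [hx, hy, hz]
    have := Gfun_mul_le ![x, y, -x - y] (M := 1 + m) (fun i j => by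
      have := abs_sub (![x, y, -x - y] i) (![x, y, -x - y] j)
      linarith [hb i, hb j])
    have e1 : |x - (-x - y)| = |2 * x + y| := by ring_nf
    have e2 : |y - (-x - y)| = |x + 2 * y| := by ring_nf
    simpa only [Matrix.cons_val, e1, e2] using this
  have hnorm : ‖δ • (x, y)‖ ≤ δ * m := by
    rw [norm_smul, Real.norm_of_nonneg hδ.le]
    gcongr
    exact max_le hx hy
  have hpow : (1 + δ * m) ^ (-A) ≤ (1 + ‖δ • (x, y)‖) ^ (-(3 : ℝ)) := by
    have h1 : 1 ≤ 1 + δ * m := by nlinarith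
    calc (1 + δ * m) ^ (-A) ≤ (1 + δ * m) ^ (-(3 : ℝ)) :=
          Real.rpow_le_rpow_of_exponent_le h1 (by linarith)
      _ ≤ _ := Real.rpow_le_rpow_of_nonpos (by positivity) (by linarith) (by norm_num)
  have hM : (1 + m) ^ (-(2 : ℝ)) * (1 + m) ^ 2 = 1 := by
    rw [Real.rpow_neg (by positivity), Real.rpow_two]
    field_simp
  calc _ = (Gfun 3 ![x, y, -x - y] *
      ((1 + |x - y|) * (1 + |2 * x + y|) * (1 + |x + 2 * y|))) *
        ((1 + δ * m) ^ (-A) * (1 + m) ^ (-(2 : ℝ))) := by ring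
    _ ≤ 8 * (1 + m) ^ 2 * ((1 + δ * m) ^ (-A) * (1 + m) ^ (-(2 : ℝ))) := by gcongr
    _ = 8 * (1 + δ * m) ^ (-A) * ((1 + m) ^ (-(2 : ℝ)) * (1 + m) ^ 2) := by ring
    _ = 8 * (1 + δ * m) ^ (-A) := by rw [hM, mul_one]
    _ ≤ _ := by gcongr

theorem statement15 (A : ℝ) (hA : 3 ≤ A) :
    ∃ C : ℝ, 0 < C ∧ ∀ δ : ℝ, 0 < δ → δ < 1 →
      (∫⁻ τ : ℝ × ℝ, ENNReal.ofReal
          (Gfun 3 ![τ.1, τ.2, -τ.1 - τ.2] *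
            (1 + δ * max |τ.1| (max |τ.2| |τ.1 + τ.2|)) ^ (-A) *
            (1 + max |τ.1| (max |τ.2| |τ.1 + τ.2|)) ^ (-(2 : ℝ)) *
            ((1 + |τ.1 - τ.2|) * (1 + |2 * τ.1 + τ.2|) * (1 + |τ.1 + 2 * τ.2|)))) ≤
        ENNReal.ofReal (C * δ ^ (-(2 : ℝ))) := by
  set f : ℝ × ℝ → ℝ := fun τ => 8 * (1 + ‖τ‖) ^ (-(3 : ℝ)) with hf
  have hf0 : ∀ τ, 0 ≤ f τ := fun τ => by positivity
  have hdim : Module.finrank ℝ (ℝ × ℝ) = 2 := by simp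
  have hfi : Integrable f := (integrable_one_add_norm (by rw [hdim]; norm_num)).const_mul 8
  have hI : 0 ≤ ∫ τ, f τ := integral_nonneg hf0
  -- The summand `1` only serves to make the constant visibly positive.
  refine ⟨(∫ τ, f τ) + 1, by linarith, fun δ hδ _ => ?_⟩
  calc _ ≤ ∫⁻ τ : ℝ × ℝ, ENNReal.ofReal (f (δ • τ)) :=
        lintegral_mono fun τ => ENNReal.ofReal_le_ofReal (integrand_le hA hδ τ)
    _ = ENNReal.ofReal (∫ τ, f (δ • τ)) :=
        (ofReal_integral_eq_lintegral_ofReal (hfi.comp_smul hδ.ne')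
          (Filter.Eventually.of_forall fun τ => hf0 _)).symm
    _ ≤ _ := by
        apply ENNReal.ofReal_le_ofReal
        rw [Measure.integral_comp_smul, hdim, Real.rpow_neg hδ.le, Real.rpow_two,
          abs_of_nonneg (by positivity), smul_eq_mul, mul_comm]
        gcongr
        linarith
end

section
/- There is an absolute constant C > 0 such that for all real τ₁, τ₂, τ₃, τ₄ with τ₁ + τ₂ + τ₃ + τ₄ = 0 one has G(τ₁, τ₂, τ₃, τ₄) · ∏_{1 ≤ i < j ≤ 4} (1 + |τ_i − τ_j|) ≤ C · (1 + max_j |τ_j|)^{9/2}. -/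
/-- Three of the six factors are reduced to their square roots, giving the exponent
`3 * (1/2) + 3 = 9/2`. -/
lemma six_factor_bound {B x y z u v w : ℝ} (hx : 1 ≤ x) (hy : 1 ≤ y) (hz : 1 ≤ z)
    (hu : 1 ≤ u) (hv : 1 ≤ v) (hw : 1 ≤ w) (hxB : x ≤ B) (hyB : y ≤ B) (hzB : z ≤ B)
    (huB : u ≤ B) (hvB : v ≤ B) (hwB : w ≤ B) :
    (x ^ (-(1 / 2 : ℝ)) * y ^ (-(1 / 2 : ℝ)) * z ^ (-(1 / 2 : ℝ))) * (x * y * z * u * v * w) ≤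
      B ^ ((9 : ℝ) / 2) := by
  have key : ∀ t : ℝ, 1 ≤ t → t ≤ B → t ^ (-(1 / 2 : ℝ)) * t ≤ B ^ (1 / 2 : ℝ) := by
    intro t ht htB
    have h : t ^ (-(1 / 2 : ℝ)) * t = t ^ (1 / 2 : ℝ) := by
      rw [← Real.rpow_add_one (by positivity)]
      norm_num
    rw [h]
    exact Real.rpow_le_rpow (by positivity) htB (by norm_num)
  have hB : 0 < B := by linarith
  have hpow : B ^ ((9 : ℝ) / 2) =
      B ^ (1 / 2 : ℝ) * B ^ (1 / 2 : ℝ) * B ^ (1 / 2 : ℝ) * B * B * B := by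
    rw [← Real.rpow_add hB, ← Real.rpow_add hB, ← Real.rpow_add_one hB.ne',
      ← Real.rpow_add_one hB.ne', ← Real.rpow_add_one hB.ne']
    norm_num
  have h1 := key x hx hxB
  have h2 := key y hy hyB
  have h3 := key z hz hzB
  calc _ = (x ^ (-(1 / 2 : ℝ)) * x) * (y ^ (-(1 / 2 : ℝ)) * y) * (z ^ (-(1 / 2 : ℝ)) * z) *
        u * v * w := by ring
    _ ≤ _ := by
      rw [hpow]
      gcongr

/-- The bound for one summand of `G`, with the extremal value taken at an arbitrary index `k`. -/
lemma summand_bound (a b c d B : ℝ) (k : Fin 4)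
    (hB : ∀ i j : Fin 4, 1 + |![a, b, c, d] i - ![a, b, c, d] j| ≤ B) :
    (∏ j, (1 + |![a, b, c, d] k - ![a, b, c, d] j|) ^ (-(1 / 2 : ℝ))) *
      ((1 + |a - b|) * (1 + |a - c|) * (1 + |a - d|) *
        (1 + |b - c|) * (1 + |b - d|) * (1 + |c - d|)) ≤ B ^ ((9 : ℝ) / 2) := by
  have one_le : ∀ x y : ℝ, 1 ≤ 1 + |x - y| := fun x y => by
    linarith [abs_nonneg (x - y)]
  have hab : 1 + |a - b| ≤ B := hB 0 1
  have hac : 1 + |a - c| ≤ B := hB 0 2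
  have had : 1 + |a - d| ≤ B := hB 0 3
  have hbc : 1 + |b - c| ≤ B := hB 1 2
  have hbd : 1 + |b - d| ≤ B := hB 1 3
  have hcd : 1 + |c - d| ≤ B := hB 2 3
  rw [Fin.prod_univ_four]
  fin_cases k
  · have h := six_factor_bound (one_le a b) (one_le a c) (one_le a d) (one_le b c) (one_le b d)
      (one_le c d) hab hac had hbc hbd hcd
    refine le_trans (le_of_eq ?_) h
    simp
  · have h := six_factor_bound (one_le a b) (one_le b c) (one_le b d) (one_le a c) (one_le a d)
      (one_le c d) hab hbc hbd hac had hcd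
    refine le_trans (le_of_eq ?_) h
    simp [-mul_eq_mul_left_iff, -mul_eq_mul_right_iff, abs_sub_comm b a]
    ring
  · have h := six_factor_bound (one_le a c) (one_le b c) (one_le c d) (one_le a b) (one_le a d)
      (one_le b d) hac hbc hcd hab had hbd
    refine le_trans (le_of_eq ?_) h
    simp [-mul_eq_mul_left_iff, -mul_eq_mul_right_iff, abs_sub_comm c a, abs_sub_comm c b]
    ring
  · have h := six_factor_bound (one_le a d) (one_le b d) (one_le c d) (one_le a b) (one_le a c)
      (one_le b c) had hbd hcd hab hac hbc
    refine le_trans (le_of_eq ?_) h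
    simp [-mul_eq_mul_left_iff, -mul_eq_mul_right_iff, abs_sub_comm d a, abs_sub_comm d b,
      abs_sub_comm d c]
    ring

theorem statement16 :
    ∃ C : ℝ, 0 < C ∧ ∀ τ₁ τ₂ τ₃ τ₄ : ℝ, τ₁ + τ₂ + τ₃ + τ₄ = 0 →
      Gfun 4 ![τ₁, τ₂, τ₃, τ₄] *
          ((1 + |τ₁ - τ₂|) * (1 + |τ₁ - τ₃|) * (1 + |τ₁ - τ₄|) *
            (1 + |τ₂ - τ₃|) * (1 + |τ₂ - τ₄|) * (1 + |τ₃ - τ₄|)) ≤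
        C * (1 + max |τ₁| (max |τ₂| (max |τ₃| |τ₄|))) ^ ((9 : ℝ) / 2) := by
  refine ⟨2 * 2 ^ ((9 : ℝ) / 2), by positivity, fun a b c d _ => ?_⟩
  set M : ℝ := max |a| (max |b| (max |c| |d|)) with hM
  have hle : ∀ i : Fin 4, |![a, b, c, d] i| ≤ M := by
    intro i
    fin_cases i <;> simp [hM]
  have hM0 : 0 ≤ M := (abs_nonneg _).trans (hle 0)
  have hB : ∀ i j : Fin 4, 1 + |![a, b, c, d] i - ![a, b, c, d] j| ≤ 2 * (1 + M) := by
    intro i j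
    linarith [abs_sub (![a, b, c, d] i) (![a, b, c, d] j), hle i, hle j]
  obtain ⟨k, hk⟩ := exists_eq_ciSup_of_finite (f := ![a, b, c, d])
  obtain ⟨l, hl⟩ := exists_eq_ciInf_of_finite (f := ![a, b, c, d])
  have hsup : ∀ j, 1 + ![a, b, c, d] k - ![a, b, c, d] j =
      1 + |![a, b, c, d] k - ![a, b, c, d] j| := by
    intro j
    have hj : ![a, b, c, d] j ≤ ![a, b, c, d] k := by
      rw [hk]
      exact le_ciSup (Set.finite_range _).bddAbove j
    rw [abs_of_nonneg (sub_nonneg.2 hj)]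
    ring
  unfold Gfun
  rw [← hk, ← hl]
  simp only [hsup]
  have h1 := summand_bound a b c d _ k hB
  have h2 := summand_bound a b c d _ l hB
  rw [Real.mul_rpow (by norm_num) (by positivity)] at h1 h2
  rw [add_mul]
  linarith
end

section
/- For real numbers α, n, d, f define φ(α, n, d, f) := n(n−1)/2 + n d /(2f) − α(−n(n+1)/4 + 3/2 + (d²/f − 2f − n + d)/2). Then for every real α with 1/2 ≤ α ≤ 2, every real n ≥ 5, and all reals f, d with 1 ≤ f ≤ d ≤ n, one has φ(α, n, d, f) ≤ max( (α + 2)n²/4 + 3αn/4 − 3α/2 , (α + 1/(2α) + 2)n²/4 + 3n(α − 1)/4 − 3α/8 ). -/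
/-!
Put `r = d / f ≥ 1`. In the variables `(r, f)` the part of `phiExp` depending on `d` and `f` is
`n r / 2 - α f (r² + r - 2) / 2`, which is non-increasing in `f`, so `f = 1` is the worst case.
What remains is a concave quadratic in `r`, with maximum at `r = (n - α) / (2 α)`; the maximal value
is exactly the second entry of the `max`. Hence that entry alone dominates, for every `α > 0`.
-/

/-- The exponent function `φ(α, n, d, f)` from the paper. -/
noncomputable def phiExp (α n d f : ℝ) : ℝ :=
  n * (n - 1) / 2 + n * d / (2 * f) -
    α * (-(n * (n + 1)) / 4 + 3 / 2 + (d ^ 2 / f - 2 * f - n + d) / 2)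

theorem statement18 (α n d f : ℝ) (hα1 : 1 / 2 ≤ α) (hα2 : α ≤ 2) (hn : 5 ≤ n)
    (hf : 1 ≤ f) (hfd : f ≤ d) (hdn : d ≤ n) :
    phiExp α n d f ≤
      max ((α + 2) * n ^ 2 / 4 + 3 * α * n / 4 - 3 * α / 2)
        ((α + 1 / (2 * α) + 2) * n ^ 2 / 4 + 3 * n * (α - 1) / 4 - 3 * α / 8) := by
  apply le_max_of_le_right
  have hα : 0 < α := by linarith
  have hf0 : 0 < f := by linarith
  obtain ⟨r, hr⟩ : ∃ r, r = d / f := ⟨_, rfl⟩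
  have hr1 : 1 ≤ r := by rw [hr, one_le_div hf0]; exact hfd
  obtain rfl : d = r * f := by rw [hr]; field_simp
  -- The first summand is the loss from `f ≠ 1`, the second the completed square in `r`.
  have key : (α + 1 / (2 * α) + 2) * n ^ 2 / 4 + 3 * n * (α - 1) / 4 - 3 * α / 8
      - phiExp α n (r * f) f
      = α * (f - 1) * ((r - 1) * (r + 2)) / 2 + (n - α - 2 * α * r) ^ 2 / (8 * α) := by
    unfold phiExp
    field_simp
    ring
  have h1 : 0 ≤ α * (f - 1) * ((r - 1) * (r + 2)) / 2 := by
    have : 0 ≤ f - 1 := by linarith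
    have : 0 ≤ r - 1 := by linarith
    positivity
  have h2 : 0 ≤ (n - α - 2 * α * r) ^ 2 / (8 * α) := by positivity
  linarith
end

section
/- Let n ≥ 2 be an integer and let μ be a Haar measure on SL_n(ℝ). Then there exist constants c > 0 and C > 0 (depending on n and the normalization of μ) such that for all T ≥ 1: |μ({g ∈ SL_n(ℝ) : ‖g‖ ≤ T}) − c · T^{n(n−1)}| ≤ C · T^{n(n−2)}, where ‖·‖ is the Frobenius norm. -/
/-!
The volume of the norm ball is computed by elementary means on the cone over `SL_n(ℝ)`.

Write `n = K + 2`. Pushing Lebesgue measure on `{v : 0 < det v ≤ 1}` forward along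
`v ↦ det v ^ (-1/n) • vᵀ` gives a left-invariant measure on `SL_n(ℝ)`, the `coneMeasure`, because
left multiplication by `g` acts on each column of `vᵀ` by a map of determinant one. It is a Haar
measure (`coneMeasure_isHaar`), so by uniqueness every Haar measure is a positive multiple of it.

For `r = T ^ (-n)`, dilating by `T` turns the `coneMeasure` of the ball of radius `T` into
`T ^ (n ^ 2)` times the Lebesgue measure of
`{0 < det v ≤ r, ‖v‖ ^ (2 n) ≤ (det v / r) ^ 2}`. Peeling off the last vector of `v` by Fubini
(`lintegral_step`), and rotating the span of the first `K + 1` vectors into coordinate position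
(`exists_rotation`), makes `|det v|` equal to `covol w * |t|`, where `w` collects the first `K + 1`
vectors and `t` is a single real coordinate. After the substitution `t = r s / covol w` the measure
becomes `r * Psi K r`, hence `coneMeasure` of the ball is
`T ^ (n (n - 1)) * Psi K (T ^ (-n))` (`coneMeasure_frobBall`).

It remains to see that `Psi K 0 - C r ≤ Psi K r ≤ Psi K 0`, and that `Psi K 0` is finite and
positive. The integrand is `covol w ^ (-1)` times the length of the set of `s ∈ (0, 1]` with
`(A + (r s / covol w) ^ 2) ^ n ≤ s ^ 2`, where `A` collects the remaining coordinates. Setting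
`r = 0` enlarges this set by a set of length at most a constant times `min 1 (r / covol w) ^ 2`
(`sliceLen_zero_le`), so the claim follows from
`∫ covol w ^ (-1) * min 1 (r / covol w) ^ 2 dw ≤ C r` over the unit ball (`lintegral_covol_decay`).
That integral is again treated by peeling off one vector at a time: the last of the `K + 1` vectors
has two free coordinates transverse to the others and contributes `O(r / covol u ^ 2)`, with `u` the
first `K` vectors (`lintegral_tailNorm_two`), and `covol u ^ (-2)` is integrable because each of
these vectors has at least three transverse coordinates (`lintegral_covol_inv_sq`).
-/

open Matrix MeasureTheory

/-- The Frobenius norm of a real `n × n` matrix. -/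
noncomputable def frobNorm {n : ℕ} (g : Matrix (Fin n) (Fin n) ℝ) : ℝ :=
  Real.sqrt (∑ i, ∑ j, (g i j) ^ 2)

/-- The topology on `SL_n(ℝ)` induced from the (entrywise) topology on matrices. -/
noncomputable instance (n : ℕ) : TopologicalSpace (Matrix.SpecialLinearGroup (Fin n) ℝ) :=
  TopologicalSpace.induced (fun g => (g : Matrix (Fin n) (Fin n) ℝ)) inferInstance

/-! ### Gram determinants -/

/-- The sum of the squares of all entries of the tuple of vectors `v`. -/
def nsq {k n : ℕ} (v : Fin k → Fin n → ℝ) : ℝ := ∑ i, ∑ j, v i j ^ 2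

/-- The `k`-dimensional volume of the parallelepiped spanned by the rows of `v`: the square root of the
Gram determinant. -/
noncomputable def covol {k n : ℕ} (v : Fin k → Fin n → ℝ) : ℝ :=
  √ (of v * (of v)ᵀ).det

/-- The Euclidean norm of the coordinates of `x` of index at least `k`. -/
noncomputable def tailNorm {n : ℕ} (k : ℕ) (x : Fin n → ℝ) : ℝ :=
  √ (∑ j : Fin n, if k ≤ (j : ℕ) then x j ^ 2 else 0)

lemma continuous_nsq {k n : ℕ} : Continuous (nsq : (Fin k → Fin n → ℝ) → ℝ) := by
  unfold nsq; fun_prop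

lemma continuous_covol {k n : ℕ} : Continuous (covol : (Fin k → Fin n → ℝ) → ℝ) := by
  unfold covol
  refine Real.continuous_sqrt.comp (Continuous.matrix_det (Continuous.matrix_mul ?_ ?_))
  · exact continuous_id
  · exact Continuous.matrix_transpose continuous_id

lemma continuous_tailNorm {k n : ℕ} : Continuous (tailNorm k : (Fin n → ℝ) → ℝ) := by
  unfold tailNorm
  refine Real.continuous_sqrt.comp (continuous_finsetSum _ fun j _ => ?_)
  split_ifs <;> fun_prop

lemma covol_nonneg {k n : ℕ} (v : Fin k → Fin n → ℝ) : 0 ≤ covol v := Real.sqrt_nonneg _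

lemma nsq_nonneg {k n : ℕ} (v : Fin k → Fin n → ℝ) : 0 ≤ nsq v := by
  unfold nsq; positivity

lemma covol_square {n : ℕ} (v : Fin n → Fin n → ℝ) : covol v = |(of v).det| := by
  rw [covol, det_mul, det_transpose, Real.sqrt_mul_self_eq_abs]

lemma covol_zero {n : ℕ} (v : Fin 0 → Fin n → ℝ) : covol v = 1 := by
  simp [covol]

lemma nsq_snoc {k n : ℕ} (v : Fin k → Fin n → ℝ) (x : Fin n → ℝ) :
    nsq (Fin.snoc v x : Fin (k + 1) → Fin n → ℝ) = nsq v + ∑ j, x j ^ 2 := by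
  simp [nsq, Fin.sum_univ_castSucc]

lemma gram_det_eq_zero_iff {k n : ℕ} (v : Fin k → Fin n → ℝ) :
    (of v * (of v)ᵀ).det = 0 ↔ ¬ LinearIndependent ℝ v := by
  rw [← exists_vecMul_eq_zero_iff, Fintype.not_linearIndependent_iff]
  have key : ∀ a : Fin k → ℝ, a ᵥ* (of v * (of v)ᵀ) = 0 ↔ ∑ i, a i • v i = 0 := by
    intro a
    have h1 : ∑ i, a i • v i = a ᵥ* of v := by
      ext j; simp [vecMul, dotProduct]
    rw [h1, ← vecMul_vecMul]
    constructor
    · intro h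
      have : (a ᵥ* of v) ⬝ᵥ (a ᵥ* of v) = 0 := by
        rw [vecMul_transpose] at h
        rw [← dotProduct_mulVec, h, dotProduct_zero]
      exact dotProduct_self_eq_zero.mp this
    · intro h; rw [h, zero_vecMul]
  constructor
  · rintro ⟨a, ha, h⟩
    refine ⟨a, (key a).1 h, ?_⟩
    by_contra! h'
    exact ha (funext h')
  · rintro ⟨a, h, i, hi⟩
    exact ⟨a, fun h0 => hi (by simp [h0]), (key a).2 h⟩

lemma covol_snoc_of_eq_zero {k n : ℕ} (v : Fin k → Fin n → ℝ) (x : Fin n → ℝ)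
    (h : (of v * (of v)ᵀ).det = 0) : covol (Fin.snoc v x : Fin (k + 1) → Fin n → ℝ) = 0 := by
  rw [covol, (gram_det_eq_zero_iff _).2, Real.sqrt_zero]
  rw [gram_det_eq_zero_iff] at h
  intro h'
  apply h
  have := h'.comp Fin.castSucc (Fin.castSucc_injective k)
  convert this using 1
  ext i; simp

/-- Appending to `v` a vector whose component orthogonal to the span of `v` is `q` multiplies the Gram
determinant by `|q|²`. -/
lemma gram_det_snoc {k n : ℕ} (v : Fin k → Fin n → ℝ) (a : Fin k → ℝ) (q : Fin n → ℝ)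
    (hq : ∀ i, v i ⬝ᵥ q = 0) :
    (of (Fin.snoc v (∑ i, a i • v i + q) : Fin (k + 1) → Fin n → ℝ) *
      (of (Fin.snoc v (∑ i, a i • v i + q) : Fin (k + 1) → Fin n → ℝ))ᵀ).det =
      (of v * (of v)ᵀ).det * (q ⬝ᵥ q) := by
  set e : Fin k ⊕ Fin 1 ≃ Fin (k + 1) := finSumFinEquiv
  set Q : Matrix (Fin 1) (Fin n) ℝ := replicateRow (Fin 1) q
  set A : Matrix (Fin 1) (Fin k) ℝ := replicateRow (Fin 1) a
  -- the unipotent matrix that adds the combination `∑ i, a i • v i` to the last row `q`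
  set L : Matrix (Fin k ⊕ Fin 1) (Fin k ⊕ Fin 1) ℝ := fromBlocks 1 0 A 1
  have h1 : (of (Fin.snoc v (∑ i, a i • v i + q) : Fin (k + 1) → Fin n → ℝ)).submatrix e id
      = L * fromRows (of v) Q := by
    rw [fromBlocks_mul_fromRows]
    ext i j
    rcases i with i | i
    · simp [e, Fin.snoc, Fin.castLT]
    · have : (Fin.natAdd k i) = Fin.last k := by ext; simp
      simp [e, this, A, Q, Matrix.mul_apply]
  have h2 : fromRows (of v) Q * (fromRows (of v) Q)ᵀ = fromBlocks (of v * (of v)ᵀ) 0 0 (Q * Qᵀ) := by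
    rw [transpose_fromRows, fromRows_mul_fromCols]
    congr 1
    · ext i j; simpa [Q, Matrix.mul_apply, dotProduct] using hq i
    · ext i j; simpa [Q, Matrix.mul_apply, dotProduct, mul_comm] using hq j
  rw [← det_submatrix_equiv_self e, ← Matrix.submatrix_mul_equiv _ _ e (Equiv.refl _) e,
    ← transpose_submatrix]
  simp only [Equiv.coe_refl]
  rw [h1, transpose_mul, Matrix.mul_assoc, ← Matrix.mul_assoc (fromRows _ _), h2, det_mul, det_mul,
    det_transpose, det_fromBlocks_zero₂₁]
  have hL : L.det = 1 := by simp [L]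
  have hQ : (Q * Qᵀ).det = q ⬝ᵥ q := by simp [Q, Matrix.mul_apply, dotProduct]
  rw [hL, hQ]; ring

/-! ### Peeling off the last vector -/

/-- An orthogonal map taking the span of the `k` independent vectors `v` to the span of the first `k`
coordinate vectors: the distance from `x` to the span of `v` becomes the norm of the coordinates of
`U x` of index at least `k`. -/
lemma exists_rotation {k n : ℕ} (v : Fin k → Fin n → ℝ) (hv : LinearIndependent ℝ v) :
    ∃ U : (Fin n → ℝ) → (Fin n → ℝ), MeasurePreserving U ∧
      (∀ x, ∑ j, U x j ^ 2 = ∑ j, x j ^ 2) ∧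
      ∀ x, covol (Fin.snoc v x : Fin (k + 1) → Fin n → ℝ) = covol v * tailNorm k (U x) := by
  classical
  set E := EuclideanSpace ℝ (Fin n)
  set v' : Fin k → E := fun i => WithLp.toLp 2 (v i) with hv'
  have hli : LinearIndependent ℝ v' :=
    hv.map' ((WithLp.linearEquiv 2 ℝ (Fin n → ℝ)).symm : (Fin n → ℝ) →ₗ[ℝ] E)
      (LinearEquiv.ker _)
  set W : Submodule ℝ E := Submodule.span ℝ (Set.range v') with hW
  have hfr : Module.finrank ℝ W = k := by
    rw [hW, finrank_span_eq_card hli, Fintype.card_fin]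
  have hkn : k ≤ n := by
    have := hli.fintype_card_le_finrank
    simpa [E] using this
  set w : OrthonormalBasis (Fin k) ℝ W :=
    (stdOrthonormalBasis ℝ W).reindex (finCongr hfr) with hw
  -- an orthonormal basis of the span in the first `k` slots, to be completed to one of the whole space
  set u : Fin n → E := fun j => if h : (j : ℕ) < k then (w ⟨j, h⟩ : E) else 0 with hu
  have hon : Orthonormal ℝ (Set.domRestrict {j : Fin n | (j : ℕ) < k} u) := by
    have h1 : Set.domRestrict {j : Fin n | (j : ℕ) < k} u =
        (fun i => (w i : E)) ∘ fun j : {j : Fin n | (j : ℕ) < k} => (⟨j.1, j.2⟩ : Fin k) := by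
      ext1 j
      have := j.2
      simp only [Set.mem_ofPred_eq] at this
      simp [Set.domRestrict, hu, this]
    rw [h1]
    have h2 : Orthonormal ℝ (fun i => (w i : E)) :=
      w.orthonormal.comp_linearIsometry W.subtypeₗᵢ
    refine h2.comp _ ?_
    intro a b hab
    simpa [Fin.ext_iff, Subtype.ext_iff] using hab
  obtain ⟨b, hb⟩ := hon.exists_orthonormalBasis_extension_of_card_eq
    (by simp [E])
  have hbw : ∀ i : Fin k, b ⟨i, i.2.trans_le hkn⟩ = w i := by
    intro i
    rw [hb _ (by simp)]
    simp [hu]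
  have hperp : ∀ j : Fin n, k ≤ (j : ℕ) → ∀ y ∈ W, inner ℝ y (b j) = 0 := by
    intro j hj y hy
    have : (⟨y, hy⟩ : W) = ∑ i, w.repr ⟨y, hy⟩ i • w i := (w.sum_repr _).symm
    have h3 : y = ∑ i, w.repr ⟨y, hy⟩ i • (w i : E) := by
      have := congrArg (Subtype.val) this
      simpa using this
    rw [h3, sum_inner]
    refine Finset.sum_eq_zero fun i _ => ?_
    rw [inner_smul_left, ← hbw, b.inner_eq_zero, mul_zero]
    intro h
    have := congrArg Fin.val h
    simp at this
    omega
  refine ⟨fun x => WithLp.ofLp (b.repr (WithLp.toLp 2 x)), ?_, ?_, ?_⟩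
  · exact (PiLp.volume_preserving_ofLp (Fin n)).comp
      ((b.repr.measurePreserving).comp (PiLp.volume_preserving_toLp (Fin n)))
  · intro x
    have h := b.repr.norm_map (WithLp.toLp 2 x)
    have h2 : ‖b.repr (WithLp.toLp 2 x)‖ ^ 2 = ‖(WithLp.toLp 2 x : E)‖ ^ 2 := by rw [h]
    rw [EuclideanSpace.norm_sq_eq, EuclideanSpace.norm_sq_eq] at h2
    simpa only [Real.norm_eq_abs, sq_abs] using h2
  · intro x
    set x' : E := WithLp.toLp 2 x with hx'
    -- `x = p + q` with `p` in the span of `v` and `q` orthogonal to it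
    set q : E := ∑ j : Fin n, if k ≤ (j : ℕ) then b.repr x' j • b j else 0 with hq
    set p : E := ∑ j : Fin n, if k ≤ (j : ℕ) then 0 else b.repr x' j • b j with hp
    have hpq : x' = p + q := by
      rw [hp, hq, ← Finset.sum_add_distrib, ← b.sum_repr x']
      refine Finset.sum_congr rfl fun j _ => ?_
      simp only [b.sum_repr]
      split_ifs <;> simp
    have hpW : p ∈ W := by
      refine Submodule.sum_mem _ fun j _ => ?_
      split_ifs with h
      · exact zero_mem _
      · refine Submodule.smul_mem _ _ ?_
        have := hbw ⟨j, by omega⟩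
        simp only [Fin.eta] at this
        rw [this]; exact Subtype.mem _
    have hqW : ∀ y ∈ W, inner ℝ y q = 0 := by
      intro y hy
      rw [hq, inner_sum]
      refine Finset.sum_eq_zero fun j _ => ?_
      split_ifs with h
      · rw [inner_smul_right, hperp j h y hy, mul_zero]
      · simp
    obtain ⟨a, ha⟩ := (Submodule.mem_span_range_iff_exists_fun ℝ).1 hpW
    have hx : x = ∑ i, a i • v i + WithLp.ofLp q := by
      have := congrArg WithLp.ofLp hpq
      rw [← ha, WithLp.ofLp_add, WithLp.ofLp_sum] at this
      exact this
    have hqq : WithLp.ofLp q ⬝ᵥ WithLp.ofLp q =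
        ∑ j : Fin n, if k ≤ (j : ℕ) then (b.repr x' j) ^ 2 else 0 := by
      have h1 : WithLp.ofLp q ⬝ᵥ WithLp.ofLp q = ‖q‖ ^ 2 := by
        rw [EuclideanSpace.norm_sq_eq]; simp [dotProduct, sq]
      have h2 : ∀ j, b.repr q j = if k ≤ (j : ℕ) then (b.repr x' j) else 0 := by
        intro j
        rw [b.repr_apply_apply, hq, inner_sum, Finset.sum_eq_single j]
        · split_ifs
          · rw [inner_smul_right, b.inner_eq_one, mul_one]
          · simp
        · intro i _ hij
          split_ifs
          · rw [inner_smul_right, b.inner_eq_zero hij.symm, mul_zero]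
          · simp
        · simp
      rw [h1, ← b.repr.norm_map, EuclideanSpace.norm_sq_eq]
      refine Finset.sum_congr rfl fun j _ => ?_
      rw [h2]
      split_ifs <;> simp
    have hvq : ∀ i, v i ⬝ᵥ WithLp.ofLp q = 0 := by
      intro i
      have := hqW (v' i) (Submodule.subset_span ⟨i, rfl⟩)
      rw [EuclideanSpace.inner_eq_star_dotProduct] at this
      simpa [hv', dotProduct_comm] using this
    have := gram_det_snoc v a (WithLp.ofLp q) hvq
    rw [← hx, hqq] at this
    rw [covol, this, covol, tailNorm, Real.sqrt_mul']
    exact Finset.sum_nonneg fun j _ => by split_ifs <;> positivity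

/-- Fubini in the last vector `x`, with `x` rotated by `exists_rotation` so that only its transverse
coordinates enter the covolume. For dependent `v` both covolumes vanish. -/
lemma lintegral_step {k n : ℕ} (F : ℝ → ℝ → ENNReal) (hF : Measurable (Function.uncurry F)) :
    ∫⁻ v : Fin (k + 1) → Fin n → ℝ, F (nsq v) (covol v) =
      ∫⁻ v : Fin k → Fin n → ℝ, ∫⁻ x : Fin n → ℝ,
        F (nsq v + ∑ j, x j ^ 2) (covol v * tailNorm k x) := by
  have hm : Measurable fun v : Fin (k + 1) → Fin n → ℝ => F (nsq v) (covol v) :=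
    hF.comp (continuous_nsq.measurable.prodMk continuous_covol.measurable)
  have he := (volume_preserving_piFinSuccAbove (fun _ : Fin (k + 1) => Fin n → ℝ)
    (Fin.last k)).symm
  rw [← he.lintegral_comp hm, Measure.volume_eq_prod, lintegral_prod_symm]
  · refine lintegral_congr fun v => ?_
    have hs : ∀ x : Fin n → ℝ, (MeasurableEquiv.piFinSuccAbove
        (fun _ : Fin (k + 1) => Fin n → ℝ) (Fin.last k)).symm (x, v) = Fin.snoc v x := by
      intro x
      ext i : 1
      refine Fin.lastCases ?_ (fun i => ?_) i
      · simp [MeasurableEquiv.piFinSuccAbove]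
      · simp [MeasurableEquiv.piFinSuccAbove]
    simp only [hs, nsq_snoc]
    by_cases hv : LinearIndependent ℝ v
    · obtain ⟨U, hU, hU1, hU2⟩ := exists_rotation v hv
      simp only [hU2]
      rw [← hU.lintegral_comp (f := fun x => F (nsq v + ∑ j, x j ^ 2) (covol v * tailNorm k x))]
      · simp only [hU1]
      · refine hF.comp (Measurable.prodMk ?_ ?_)
        · fun_prop
        · exact (continuous_tailNorm.measurable).const_mul _
    · have h0 := (gram_det_eq_zero_iff v).2 hv
      have h1 : covol v = 0 := by rw [covol, h0, Real.sqrt_zero]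
      simp [covol_snoc_of_eq_zero v _ h0, h1]
  · exact (hm.comp he.measurable).aemeasurable

/-! ### Integrals of functions of transverse norms -/

lemma lintegral_comp_abs_eq (φ : ℝ → ENNReal) :
    ∫⁻ t : ℝ, φ |t| = 2 * ∫⁻ t in Set.Ioi (0 : ℝ), φ t := by
  have h1 : ∫⁻ t in Set.Ioi (0 : ℝ), φ |t| = ∫⁻ t in Set.Ioi (0 : ℝ), φ t :=
    setLIntegral_congr_fun measurableSet_Ioi fun t ht => by rw [abs_of_pos ht]
  have h2 : ∫⁻ t in (Set.Ioi (0 : ℝ))ᶜ, φ |t| = ∫⁻ t in Set.Ioi (0 : ℝ), φ t := by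
    rw [Set.compl_Ioi, ← setLIntegral_congr Iio_ae_eq_Iic, ← h1]
    have := (Measure.measurePreserving_neg (volume : Measure ℝ)).setLIntegral_comp_preimage_emb
      (MeasurableEquiv.neg ℝ).measurableEmbedding (fun t => φ |t|) (Set.Ioi 0)
    rw [← this]
    simp
  rw [← lintegral_add_compl _ (measurableSet_Ioi (a := (0 : ℝ))), h1, h2, two_mul]

lemma lintegral_pi_prod {n : ℕ} (φ : Fin n → ℝ → ENNReal) (hφ : ∀ j, Measurable (φ j)) :
    ∫⁻ x : Fin n → ℝ, ∏ j, φ j (x j) = ∏ j, ∫⁻ t, φ j t := by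
  induction n with
  | zero => simp [Measure.volume_pi_eq_dirac (0 : Fin 0 → ℝ)]
  | succ n ih =>
    have he := (volume_preserving_piFinSuccAbove (fun _ : Fin (n + 1) => ℝ) 0).symm
    have hm : Measurable fun x : Fin (n + 1) → ℝ => ∏ j, φ j (x j) :=
      Finset.measurable_prod _ fun j _ => (hφ j).comp (measurable_pi_apply j)
    have hm' : Measurable fun x : Fin n → ℝ => ∏ j : Fin n, φ j.succ (x j) :=
      Finset.measurable_prod _ fun j _ => (hφ _).comp (measurable_pi_apply j)
    rw [← he.lintegral_comp hm, Measure.volume_eq_prod]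
    simp only [Fin.prod_univ_succ, MeasurableEquiv.piFinSuccAbove_symm_apply,
      Fin.insertNthEquiv_zero, Fin.consEquiv_apply, Fin.cons_zero, Fin.cons_succ]
    rw [← ih _ fun j => hφ j.succ,
      ← lintegral_prod_mul (hφ 0).aemeasurable hm'.aemeasurable]

/-- Since `g` is decreasing and `|x_j| ≤ tailNorm k x` for `k ≤ j`, the power `g (tailNorm k x) ^ (n - k)`
is at most a product of functions of single coordinates. -/
lemma lintegral_tailNorm_le {n k : ℕ} (hk : k ≤ n) (g : ℝ → ℝ) (hg : Measurable g)
    (hg0 : ∀ t, 0 ≤ g t) (hga : AntitoneOn g (Set.Ioi 0)) :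
    ∫⁻ x : Fin n → ℝ, (if ∑ j, x j ^ 2 ≤ 1 then ENNReal.ofReal (g (tailNorm k x) ^ (n - k)) else 0)
      ≤ (∫⁻ t in Set.Icc (-1 : ℝ) 1, ENNReal.ofReal (g |t|)) ^ (n - k) * 2 ^ k := by
  classical
  set φ : Fin n → ℝ → ENNReal := fun j t => (Set.Icc (-1 : ℝ) 1).indicator
    (fun t => if k ≤ (j : ℕ) then ENNReal.ofReal (g |t|) else 1) t with hφ
  have hφm : ∀ j, Measurable (φ j) := by
    intro j
    refine Measurable.indicator ?_ measurableSet_Icc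
    split_ifs
    · exact (hg.comp measurable_norm).ennreal_ofReal
    · exact measurable_const
  have hcard : (Finset.univ.filter fun j : Fin n => k ≤ (j : ℕ)).card = n - k ∧
      (Finset.univ.filter fun j : Fin n => ¬ k ≤ (j : ℕ)).card = k := by
    have h2 : (Finset.univ.filter fun j : Fin n => ¬ k ≤ (j : ℕ)).card = k := by
      simp only [not_le]
      rw [Fin.card_filter_val_lt]
      omega
    have h3 := Finset.card_filter_add_card_filter_not (s := (Finset.univ : Finset (Fin n)))
      (fun j : Fin n => k ≤ (j : ℕ))
    rw [h2, Finset.card_univ, Fintype.card_fin] at h3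
    exact ⟨by omega, h2⟩
  have hI : ∏ j, ∫⁻ t, φ j t =
      (∫⁻ t in Set.Icc (-1 : ℝ) 1, ENNReal.ofReal (g |t|)) ^ (n - k) * 2 ^ k := by
    have : ∀ j : Fin n, ∫⁻ t, φ j t = if k ≤ (j : ℕ) then
        (∫⁻ t in Set.Icc (-1 : ℝ) 1, ENNReal.ofReal (g |t|)) else 2 := by
      intro j
      simp only [hφ]
      rw [lintegral_indicator measurableSet_Icc]
      split_ifs
      · rfl
      · simp; norm_num
    simp only [this]
    rw [Finset.prod_ite, Finset.prod_const, Finset.prod_const, hcard.1, hcard.2]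
  rw [← hI, ← lintegral_pi_prod φ hφm]
  refine lintegral_mono_ae ?_
  have hne : ∀ᵐ x : Fin n → ℝ, ∀ j, x j ≠ 0 :=
    ae_all_iff.2 fun j => Measure.ae_eval_ne (fun _ => volume) j 0
  filter_upwards [hne] with x hx
  split_ifs with h1
  swap
  · exact zero_le
  have hle : ∀ j, x j ∈ Set.Icc (-1 : ℝ) 1 := by
    intro j
    have : x j ^ 2 ≤ 1 := (Finset.single_le_sum (f := fun j => x j ^ 2)
      (fun i _ => sq_nonneg _) (Finset.mem_univ j)).trans h1
    exact abs_le.1 ((sq_le_one_iff_abs_le_one _).1 this)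
  have hprod : ∏ j, φ j (x j) =
      ENNReal.ofReal (∏ j ∈ Finset.univ.filter (fun j : Fin n => k ≤ (j : ℕ)), g |x j|) := by
    simp only [hφ, Set.indicator_of_mem (hle _)]
    rw [Finset.prod_ite, Finset.prod_const_one, mul_one,
      ENNReal.ofReal_prod_of_nonneg fun _ _ => hg0 _]
  rw [hprod]
  refine ENNReal.ofReal_le_ofReal ?_
  rw [← hcard.1, ← Finset.prod_const]
  refine Finset.prod_le_prod (fun _ _ => hg0 _) fun j hj => ?_
  have hj' : k ≤ (j : ℕ) := by simpa using hj
  have hpos : 0 < |x j| := abs_pos.2 (hx j)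
  have hxt : |x j| ≤ tailNorm k x := by
    rw [← Real.sqrt_sq_eq_abs, tailNorm]
    refine Real.sqrt_le_sqrt ?_
    have := Finset.single_le_sum (f := fun j : Fin n => if k ≤ (j : ℕ) then x j ^ 2 else 0)
      (fun i _ => by split_ifs <;> positivity) (Finset.mem_univ j)
    simpa [hj'] using this
  exact hga hpos (hpos.trans_le hxt) hxt

/-- In `d ≥ 3` transverse dimensions `|x|⁻²` is locally integrable, since it is bounded by the product
of the factors `|x_j| ^ (-2/d)`. -/
lemma lintegral_tailNorm_inv_sq {n k : ℕ} (hk : k + 3 ≤ n) :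
    ∫⁻ x : Fin n → ℝ, (if ∑ j, x j ^ 2 ≤ 1 then ENNReal.ofReal ((tailNorm k x ^ 2)⁻¹) else 0)
      < ⊤ := by
  have hd : (3 : ℝ) ≤ ((n - k : ℕ) : ℝ) := by exact_mod_cast (by omega : 3 ≤ n - k)
  set d : ℝ := ((n - k : ℕ) : ℝ) with hdd
  have hb := lintegral_tailNorm_le (n := n) (k := k) (by omega) (fun t => |t| ^ (-(2 / d)))
    (by fun_prop) (fun t => by positivity) (by
      intro a ha b hb hab
      dsimp only
      rw [abs_of_pos (show 0 < a from ha), abs_of_pos (show 0 < b from hb)]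
      exact Real.rpow_le_rpow_of_nonpos ha hab (by
        rw [neg_nonpos]; positivity))
  refine lt_of_le_of_lt (le_of_eq ?_) (hb.trans_lt ?_)
  · refine lintegral_congr fun x => ?_
    have h0 : 0 ≤ tailNorm k x := Real.sqrt_nonneg _
    rw [abs_of_nonneg h0, ← Real.rpow_natCast _ (n - k), ← Real.rpow_mul h0, ← hdd]
    have : -(2 / d) * d = -2 := by field_simp
    rw [this, Real.rpow_neg h0]
    norm_cast
  · refine ENNReal.mul_lt_top (ENNReal.pow_lt_top ?_) (by simp)
    simp only [abs_abs]
    have hIntg : IntegrableOn (fun t : ℝ => |t| ^ (-(2 / d))) (Set.Icc (-1) 1) := by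
      have h1 : (-1 : ℝ) < -(2 / d) := by
        have : 2 / d < 1 := by rw [div_lt_one (by linarith)]; linarith
        linarith
      have h2 : IntervalIntegrable (fun t : ℝ => |t| ^ (-(2 / d))) volume 0 1 :=
        (intervalIntegral.intervalIntegrable_rpow' h1).congr (fun t ht => by
          rw [Set.uIoc_of_le zero_le_one] at ht
          simp only [abs_of_pos ht.1])
      have h3 : IntervalIntegrable (fun t : ℝ => |t| ^ (-(2 / d))) volume (-1) 0 := by
        have := h2.comp_mul_left (c := -1)
        simp at this
        exact this.symm
      rw [integrableOn_Icc_iff_integrableOn_Ioc,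
        ← intervalIntegrable_iff_integrableOn_Ioc_of_le (by norm_num)]
      exact h3.trans h2
    exact hIntg.lintegral_lt_top

/-- The decreasing function whose square at `s` is `s⁻¹ * min 1 (s⁻¹ ^ 2)`. It is integrable on the
half-line, being of order `s ^ (-1/2)` at `0` and `s ^ (-3/2)` at infinity. -/
noncomputable def decayFun (s : ℝ) : ℝ := √ (s⁻¹ * min 1 (s⁻¹ ^ 2))

lemma decayFun_nonneg (s : ℝ) : 0 ≤ decayFun s := Real.sqrt_nonneg _

lemma measurable_decayFun : Measurable decayFun := by
  unfold decayFun; fun_prop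

lemma antitoneOn_decayFun : AntitoneOn decayFun (Set.Ioi 0) := by
  intro a ha b hb hab
  have ha' : 0 < a := ha
  have hb' : 0 < b := hb
  unfold decayFun
  gcongr

lemma lintegral_decayFun_lt_top : ∫⁻ s : ℝ, ENNReal.ofReal (decayFun |s|) < ⊤ := by
  rw [lintegral_comp_abs_eq (fun s => ENNReal.ofReal (decayFun s)),
    ← Set.Ioc_union_Ioi_eq_Ioi (zero_le_one (α := ℝ)),
    lintegral_union measurableSet_Ioi (Set.Ioc_disjoint_Ioi le_rfl)]
  refine ENNReal.mul_lt_top (by simp) (ENNReal.add_lt_top.2 ⟨?_, ?_⟩)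
  · have hIntg : IntegrableOn (fun t : ℝ => t ^ (-(1 / 2) : ℝ)) (Set.Ioc 0 1) := by
      rw [← intervalIntegrable_iff_integrableOn_Ioc_of_le zero_le_one]
      exact intervalIntegral.intervalIntegrable_rpow' (by norm_num)
    refine lt_of_le_of_lt (setLIntegral_mono_ae (by fun_prop) (ae_of_all _ fun s hs => ?_))
      hIntg.lintegral_lt_top
    refine ENNReal.ofReal_le_ofReal ?_
    have hs0 : 0 < s := hs.1
    rw [Real.rpow_neg hs0.le, ← Real.sqrt_eq_rpow, ← Real.sqrt_inv]
    refine Real.sqrt_le_sqrt ?_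
    exact mul_le_of_le_one_right (by positivity) (min_le_left _ _)
  · have hIntg : IntegrableOn (fun t : ℝ => t ^ (-(3 / 2) : ℝ)) (Set.Ioi 1) :=
      integrableOn_Ioi_rpow_of_lt (by norm_num) one_pos
    refine lt_of_le_of_lt (setLIntegral_mono_ae (by fun_prop) (ae_of_all _ fun s hs => ?_))
      hIntg.lintegral_lt_top
    refine ENNReal.ofReal_le_ofReal ?_
    have hs0 : 0 < s := one_pos.trans hs
    refine Real.sqrt_le_iff.2 ⟨by positivity, ?_⟩
    have : (s ^ (-(3 / 2) : ℝ)) ^ 2 = (s ^ 3)⁻¹ := by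
      rw [← Real.rpow_natCast (s ^ _) 2, ← Real.rpow_mul hs0.le, ← Real.rpow_natCast s 3,
        ← Real.rpow_neg hs0.le]
      norm_num
    rw [this]
    calc s⁻¹ * min 1 (s⁻¹ ^ 2) ≤ s⁻¹ * s⁻¹ ^ 2 := by gcongr; exact min_le_right _ _
      _ = (s ^ 3)⁻¹ := by field_simp

/-- With exactly two transverse dimensions, rescaling by `r / D` gives a bound linear in `r`, uniform
in `D`. For `D = 0` both sides vanish, as `0⁻¹ = 0`. -/
lemma lintegral_tailNorm_two (k : ℕ) : ∃ C : ENNReal, C < ⊤ ∧ ∀ r D : ℝ, 0 < r → 0 ≤ D →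
    ∫⁻ x : Fin (k + 2) → ℝ, (if ∑ j, x j ^ 2 ≤ 1 then ENNReal.ofReal
      ((D * tailNorm k x)⁻¹ * min 1 ((r * (D * tailNorm k x)⁻¹) ^ 2)) else 0)
      ≤ C * ENNReal.ofReal (r * (D ^ 2)⁻¹) := by
  set I := ∫⁻ s : ℝ, ENNReal.ofReal (decayFun |s|) with hI
  have hIt : I < ⊤ := lintegral_decayFun_lt_top
  refine ⟨I ^ 2 * 2 ^ k, ENNReal.mul_lt_top (ENNReal.pow_lt_top hIt) (by simp), ?_⟩
  intro r D hr hD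
  rcases hD.eq_or_lt with rfl | hD
  · simp
  set l := r / D with hl
  have hl0 : 0 < l := by positivity
  have hb := lintegral_tailNorm_le (n := k + 2) (k := k) (by omega) (fun t => decayFun (t / l))
    (measurable_decayFun.comp (by fun_prop)) (fun t => decayFun_nonneg _) (by
      intro a ha b hb hab
      exact antitoneOn_decayFun (div_pos ha hl0) (div_pos hb hl0) (by gcongr))
  have hsc : ∫⁻ t in Set.Icc (-1 : ℝ) 1, ENNReal.ofReal (decayFun (|t| / l)) ≤
      ENNReal.ofReal l * I := by
    refine (setLIntegral_le_lintegral _ _).trans (le_of_eq ?_)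
    have hm : Measurable fun s : ℝ => ENNReal.ofReal (decayFun |s|) :=
      (measurable_decayFun.comp measurable_norm).ennreal_ofReal
    have h1 := Real.smul_map_volume_mul_left (a := l⁻¹) (by positivity)
    rw [hI]
    conv_rhs => rw [← h1, lintegral_smul_measure, lintegral_map hm (by fun_prop)]
    rw [smul_eq_mul, ← mul_assoc, ← ENNReal.ofReal_mul hl0.le, abs_of_pos (by positivity),
      mul_inv_cancel₀ hl0.ne', ENNReal.ofReal_one, one_mul]
    refine lintegral_congr fun t => ?_
    rw [abs_mul, abs_of_pos (show 0 < l⁻¹ by positivity), mul_comm, div_eq_mul_inv]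
  have hpt : ∀ x : Fin (k + 2) → ℝ, (D * tailNorm k x)⁻¹ * min 1 ((r * (D * tailNorm k x)⁻¹) ^ 2)
      = r⁻¹ * decayFun (tailNorm k x / l) ^ 2 := by
    intro x
    have h0 : 0 ≤ tailNorm k x := Real.sqrt_nonneg _
    rw [decayFun, Real.sq_sqrt (by positivity)]
    have h1 : (tailNorm k x / l)⁻¹ = r * (D * tailNorm k x)⁻¹ := by
      rw [hl, inv_div, div_div, div_eq_mul_inv, mul_inv]
    rw [h1, mul_assoc, ← mul_assoc, ← mul_assoc, inv_mul_cancel₀ hr.ne', one_mul]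
  have h2 : ∀ x : Fin (k + 2) → ℝ, (if ∑ j, x j ^ 2 ≤ 1 then ENNReal.ofReal
      ((D * tailNorm k x)⁻¹ * min 1 ((r * (D * tailNorm k x)⁻¹) ^ 2)) else 0) =
      ENNReal.ofReal r⁻¹ * (if ∑ j, x j ^ 2 ≤ 1 then
        ENNReal.ofReal (decayFun (tailNorm k x / l) ^ (k + 2 - k)) else 0) := by
    intro x
    rw [hpt, ENNReal.ofReal_mul (by positivity), mul_ite, mul_zero]
    congr 4
    omega
  simp only [h2]
  rw [lintegral_const_mul' _ _ ENNReal.ofReal_ne_top]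
  have h3 : k + 2 - k = 2 := by omega
  refine (mul_le_mul_right hb _).trans ?_
  rw [h3]
  calc ENNReal.ofReal r⁻¹ * ((∫⁻ t in Set.Icc (-1 : ℝ) 1, ENNReal.ofReal (decayFun (|t| / l))) ^ 2 * 2 ^ k)
      ≤ ENNReal.ofReal r⁻¹ * ((ENNReal.ofReal l * I) ^ 2 * 2 ^ k) := by gcongr
    _ = I ^ 2 * 2 ^ k * (ENNReal.ofReal r⁻¹ * ENNReal.ofReal l ^ 2) := by ring
    _ = I ^ 2 * 2 ^ k * ENNReal.ofReal (r * (D ^ 2)⁻¹) := by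
      rw [← ENNReal.ofReal_pow hl0.le, ← ENNReal.ofReal_mul (by positivity)]
      congr 2
      rw [hl]; field_simp

/-! ### Integrability of powers of the covolume, and slices -/

/-- The inverse square of the covolume of `k ≤ K` vectors in dimension `K + 2` is integrable over the
unit ball: every added vector keeps at least three transverse coordinates. -/
lemma lintegral_covol_inv_sq {K k : ℕ} (hk : k ≤ K) :
    ∫⁻ v : Fin k → Fin (K + 2) → ℝ, (if nsq v ≤ 1 then ENNReal.ofReal ((covol v ^ 2)⁻¹) else 0)
      < ⊤ := by
  induction k with
  | zero =>
    simp [covol_zero, nsq, Measure.volume_pi_eq_dirac (0 : Fin 0 → Fin (K + 2) → ℝ)]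
  | succ k ih =>
    rw [lintegral_step (fun a b => if a ≤ 1 then ENNReal.ofReal ((b ^ 2)⁻¹) else 0)]
    swap
    · refine Measurable.ite (measurableSet_le (by fun_prop) (by fun_prop)) (by fun_prop) (by fun_prop)
    have hA := lintegral_tailNorm_inv_sq (n := K + 2) (k := k) (by omega)
    refine lt_of_le_of_lt ?_ (ENNReal.mul_lt_top (ih (by omega)) hA)
    rw [← lintegral_mul_const' _ _ hA.ne]
    refine lintegral_mono fun v => ?_
    have hne : (if nsq v ≤ 1 then ENNReal.ofReal ((covol v ^ 2)⁻¹) else 0) ≠ ⊤ := by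
      split_ifs <;> simp
    dsimp only
    rw [← lintegral_const_mul' _ _ hne]
    refine lintegral_mono fun x => ?_
    have h1 := nsq_nonneg v
    have h2 : 0 ≤ ∑ j, x j ^ 2 := by positivity
    dsimp only
    split_ifs with h3 h4 h5 <;> first | exact zero_le | (exfalso; linarith) | skip
    rw [← ENNReal.ofReal_mul (by positivity), mul_pow, mul_inv]

/-- The source of the error term: integrated over the unit ball, `covol⁻¹ * min 1 (r / covol) ^ 2` is
`O(r)`. -/
lemma lintegral_covol_decay (K : ℕ) : ∃ C : ENNReal, C < ⊤ ∧ ∀ r : ℝ, 0 < r →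
    ∫⁻ v : Fin (K + 1) → Fin (K + 2) → ℝ, (if nsq v ≤ 1 then
      ENNReal.ofReal ((covol v)⁻¹ * min 1 ((r * (covol v)⁻¹) ^ 2)) else 0)
      ≤ C * ENNReal.ofReal r := by
  obtain ⟨C, hC, h⟩ := lintegral_tailNorm_two K
  refine ⟨C * _, ENNReal.mul_lt_top hC (lintegral_covol_inv_sq (K := K) le_rfl), fun r hr => ?_⟩
  rw [lintegral_step (fun a b => if a ≤ 1 then
      ENNReal.ofReal (b⁻¹ * min 1 ((r * b⁻¹) ^ 2)) else 0)]
  swap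
  · refine Measurable.ite (measurableSet_le (by fun_prop) (by fun_prop)) (by fun_prop) (by fun_prop)
  rw [mul_assoc, mul_comm, mul_assoc, mul_comm _ C, ← lintegral_mul_const' _ _
    (ENNReal.mul_ne_top hC.ne ENNReal.ofReal_ne_top)]
  refine lintegral_mono fun v => ?_
  dsimp only
  have h1 := nsq_nonneg v
  split_ifs with h3
  · rw [mul_comm, mul_assoc, ← ENNReal.ofReal_mul hr.le]
    refine le_trans (lintegral_mono fun x => ?_) (h r (covol v) hr (covol_nonneg v))
    have h2 : 0 ≤ ∑ j, x j ^ 2 := by positivity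
    dsimp only
    split_ifs <;> first | exact le_rfl | exact zero_le | (exfalso; linarith)
  · rw [zero_mul, le_zero_iff]
    rw [lintegral_eq_zero_of_ae_eq_zero]
    refine ae_of_all _ fun x => ?_
    have h2 : 0 ≤ ∑ j, x j ^ 2 := by positivity
    exact if_neg (by linarith)

/-- The length of the set of `s ∈ (0, 1]` with `(A + (e s) ^ 2) ^ n ≤ s ^ 2`. -/
noncomputable def sliceLen (n : ℕ) (A e : ℝ) : ENNReal :=
  volume {s : ℝ | s ∈ Set.Ioc 0 1 ∧ (A + (e * s) ^ 2) ^ n ≤ s ^ 2}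

lemma sliceLen_le {n : ℕ} {A : ℝ} (hA : 0 ≤ A) (e : ℝ) : sliceLen n A e ≤ sliceLen n A 0 := by
  refine measure_mono fun s hs => ⟨hs.1, le_trans ?_ hs.2⟩
  have h0 : (0 * s) ^ 2 ≤ (e * s) ^ 2 := by rw [zero_mul, zero_pow two_ne_zero]; positivity
  gcongr

/-- The exponents are offset by two so that the right side is linear in `u ^ 2 - v ^ 2`, without a
square-root loss at `v = 0`. -/
lemma pow_sub_pow_le_mul {u v : ℝ} (hv : 0 ≤ v) (huv : v ≤ u) (m : ℕ) :
    u ^ (m + 2) - v ^ (m + 2) ≤ (m + 2) * u ^ m * (u ^ 2 - v ^ 2) := by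
  have hu := hv.trans huv
  induction m with
  | zero => simp; nlinarith
  | succ m ih =>
    have h1 : v ^ (m + 1) ≤ u ^ (m + 1) := by gcongr
    have h2 : v ^ (m + 2) * (u - v) ≤ u ^ (m + 1) * (u ^ 2 - v ^ 2) := by
      calc v ^ (m + 2) * (u - v) = v ^ (m + 1) * (v * (u - v)) := by ring
        _ ≤ u ^ (m + 1) * (u ^ 2 - v ^ 2) := by
          have : 0 ≤ v * (u - v) := mul_nonneg hv (by linarith)
          gcongr
          nlinarith
    have h3 := mul_le_mul_of_nonneg_left ih hu
    push_cast
    calc u ^ (m + 1 + 2) - v ^ (m + 1 + 2)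
        = u * (u ^ (m + 2) - v ^ (m + 2)) + v ^ (m + 2) * (u - v) := by ring
      _ ≤ u * ((m + 2) * u ^ m * (u ^ 2 - v ^ 2)) + u ^ (m + 1) * (u ^ 2 - v ^ 2) := by linarith
      _ = _ := by ring

/-- The extra points gained by setting `e = 0` satisfy `A ^ n ≤ s ^ 2 < (A + e ^ 2) ^ n`, so they form
a set of length `O(min 1 (e ^ 2))`, which is empty when `1 < A`. -/
lemma sliceLen_zero_le (m : ℕ) {A : ℝ} (hA : 0 ≤ A) (e : ℝ) :
    sliceLen (m + 2) A 0 ≤ sliceLen (m + 2) A e +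
      (if A ≤ 1 then ENNReal.ofReal (((m + 2) * 2 ^ m) * min 1 (e ^ 2)) else 0) := by
  -- the points gained by setting `e = 0` lie in `B`
  set B := {s : ℝ | s ∈ Set.Ioc 0 1 ∧ A ^ (m + 2) ≤ s ^ 2 ∧ s ^ 2 < (A + e ^ 2) ^ (m + 2)} with hB
  have hsub : {s : ℝ | s ∈ Set.Ioc 0 1 ∧ (A + (0 * s) ^ 2) ^ (m + 2) ≤ s ^ 2} ⊆
      {s : ℝ | s ∈ Set.Ioc 0 1 ∧ (A + (e * s) ^ 2) ^ (m + 2) ≤ s ^ 2} ∪ B := by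
    rintro s ⟨hs, h⟩
    by_cases h' : (A + (e * s) ^ 2) ^ (m + 2) ≤ s ^ 2
    · exact Or.inl ⟨hs, h'⟩
    · refine Or.inr ⟨hs, by simpa using h, (not_le.1 h').trans_le ?_⟩
      have : s ^ 2 ≤ 1 := by nlinarith [hs.1, hs.2]
      have h2 : (e * s) ^ 2 ≤ e ^ 2 := by
        rw [mul_pow]
        nlinarith [sq_nonneg e]
      gcongr
  refine (measure_mono hsub).trans ((measure_union_le _ _).trans ?_)
  refine add_le_add le_rfl ?_
  have hc : (1 : ℝ) ≤ (m + 2) * 2 ^ m := by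
    have : (1 : ℝ) ≤ 2 ^ m := one_le_pow₀ (by norm_num)
    nlinarith [(Nat.cast_nonneg m : (0 : ℝ) ≤ m)]
  split_ifs with hA1
  · rcases le_total 1 (e ^ 2) with he | he
    · rw [min_eq_left he, mul_one]
      calc volume B ≤ volume (Set.Ioc (0 : ℝ) 1) := measure_mono fun s hs => hs.1
        _ = ENNReal.ofReal 1 := by simp
        _ ≤ _ := ENNReal.ofReal_le_ofReal hc
    · rw [min_eq_right he]
      set u := √ (A + e ^ 2) with hu
      set v := √ A with hv
      have hu2 : u ^ 2 = A + e ^ 2 := Real.sq_sqrt (by positivity)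
      have hv2 : v ^ 2 = A := Real.sq_sqrt hA
      have hu0 : 0 ≤ u := Real.sqrt_nonneg _
      have hv0 : 0 ≤ v := Real.sqrt_nonneg _
      have huv : v ≤ u := Real.sqrt_le_sqrt (by nlinarith [sq_nonneg e])
      have hBI : B ⊆ Set.Ico (v ^ (m + 2)) (u ^ (m + 2)) := by
        rintro s ⟨hs, h1, h2⟩
        constructor
        · refine le_of_sq_le_sq ?_ hs.1.le
          rw [← pow_mul, mul_comm, pow_mul, hv2]; exact h1
        · refine lt_of_pow_lt_pow_left₀ 2 (by positivity) ?_
          rw [← pow_mul, mul_comm, pow_mul, hu2]; exact h2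
      refine (measure_mono hBI).trans ?_
      rw [Real.volume_Ico]
      refine ENNReal.ofReal_le_ofReal ((pow_sub_pow_le_mul hv0 huv m).trans ?_)
      have h3 : u ^ 2 - v ^ 2 = e ^ 2 := by rw [hu2, hv2]; ring
      have h4 : u ≤ 2 := by nlinarith
      rw [h3]
      gcongr
  · have : B = ∅ := by
      ext s
      simp only [Set.mem_empty_iff_false, iff_false]
      rintro ⟨hs, h1, -⟩
      have h2 : s ^ 2 ≤ 1 := by nlinarith [hs.1, hs.2]
      have h3 : 1 < A ^ (m + 2) := one_lt_pow₀ (not_le.1 hA1) (by omega)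
      linarith
    simp [this]

/-! ### The profile function of the ball -/

/-- The profile of the norm ball: up to the factor `2 * r`, the volume in `volume_region` after
integrating out the one coordinate transverse to the first `K + 1` vectors `v`. The remaining
coordinates of the last vector are `y`. The value at `r = 0` is the limiting profile. -/
noncomputable def Psi (K : ℕ) (r : ℝ) : ENNReal :=
  ∫⁻ v : Fin (K + 1) → Fin (K + 2) → ℝ, ∫⁻ y : Fin (K + 1) → ℝ,
    ENNReal.ofReal (covol v)⁻¹ * sliceLen (K + 2) (nsq v + ∑ j, y j ^ 2) (r * (covol v)⁻¹)

lemma Psi_le (K : ℕ) (r : ℝ) : Psi K r ≤ Psi K 0 := by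
  refine lintegral_mono fun v => lintegral_mono fun y => ?_
  have h1 := nsq_nonneg v
  simp only [zero_mul]
  gcongr
  exact sliceLen_le (by positivity) _

lemma volume_unitBall_lt_top (m : ℕ) : volume {y : Fin m → ℝ | ∑ j, y j ^ 2 ≤ 1} < ⊤ := by
  refine lt_of_le_of_lt (measure_mono ?_)
    (isCompact_Icc (a := fun _ : Fin m => (-1 : ℝ)) (b := fun _ => 1)).measure_lt_top
  intro y hy
  have : ∀ j, |y j| ≤ 1 := fun j => by
    rw [← sq_le_one_iff_abs_le_one]
    exact (Finset.single_le_sum (f := fun j => y j ^ 2)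
      (fun i _ => sq_nonneg _) (Finset.mem_univ j)).trans hy
  exact ⟨fun j => (abs_le.1 (this j)).1, fun j => (abs_le.1 (this j)).2⟩

/-- The profile is Lipschitz at `0`, which yields the error term of the asymptotic. -/
lemma Psi_zero_le (K : ℕ) : ∃ C : ENNReal, C < ⊤ ∧ ∀ r : ℝ, 0 < r →
    Psi K 0 ≤ Psi K r + C * ENNReal.ofReal r := by
  obtain ⟨C, hC, h⟩ := lintegral_covol_decay K
  set W := volume {y : Fin (K + 1) → ℝ | ∑ j, y j ^ 2 ≤ 1} with hW
  have hWt : W < ⊤ := volume_unitBall_lt_top _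
  have hWm : MeasurableSet {y : Fin (K + 1) → ℝ | ∑ j, y j ^ 2 ≤ 1} :=
    measurableSet_le (by fun_prop) (by fun_prop)
  set c : ℝ := (K + 2) * 2 ^ K with hc
  have hc0 : 0 ≤ c := by positivity
  have hk : ENNReal.ofReal c * W ≠ ⊤ := ENNReal.mul_ne_top ENNReal.ofReal_ne_top hWt.ne
  refine ⟨ENNReal.ofReal c * W * C, ENNReal.mul_lt_top hk.lt_top hC, fun r hr => ?_⟩
  set b : (Fin (K + 1) → Fin (K + 2) → ℝ) → ENNReal := fun v => if nsq v ≤ 1 then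
      ENNReal.ofReal ((covol v)⁻¹ * min 1 ((r * (covol v)⁻¹) ^ 2)) else 0 with hb
  have hbm : Measurable b := by
    have h1 := (continuous_covol (k := K + 1) (n := K + 2)).measurable
    refine Measurable.ite (measurableSet_le continuous_nsq.measurable (by fun_prop)) ?_
      (by fun_prop)
    fun_prop
  have hmain : Psi K 0 ≤ Psi K r + ∫⁻ v, ENNReal.ofReal c * W * b v := by
    unfold Psi
    rw [← lintegral_add_right _ (hbm.const_mul _)]
    refine lintegral_mono fun v => ?_
    have h1 := nsq_nonneg v
    have hcv := covol_nonneg v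
    have hyint : ∫⁻ y : Fin (K + 1) → ℝ, ENNReal.ofReal c * b v *
        ({y : Fin (K + 1) → ℝ | ∑ j, y j ^ 2 ≤ 1}.indicator 1 y) = ENNReal.ofReal c * W * b v := by
      rw [lintegral_const_mul _ (measurable_one.indicator hWm), lintegral_indicator_one hWm]
      ring
    dsimp only
    rw [← hyint, ← lintegral_add_right _ ((measurable_one.indicator hWm).const_mul _)]
    refine lintegral_mono fun y => ?_
    have h2 : 0 ≤ ∑ j, y j ^ 2 := by positivity
    have h3 := sliceLen_zero_le K (add_nonneg h1 h2) (r * (covol v)⁻¹)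
    dsimp only
    rw [zero_mul]
    refine (mul_le_mul_right h3 _).trans ?_
    rw [mul_add]
    refine add_le_add le_rfl ?_
    simp only [hb, Set.indicator_apply, Set.mem_ofPred_eq, Pi.one_apply]
    split_ifs with h4 h5 h6 <;> first | (exfalso; linarith) | skip
    · rw [← ENNReal.ofReal_mul (by positivity), mul_one, ← ENNReal.ofReal_mul hc0]
      refine ENNReal.ofReal_le_ofReal (le_of_eq ?_)
      rw [← hc]; ring
    all_goals simp
  refine hmain.trans (add_le_add le_rfl ?_)
  rw [lintegral_const_mul _ hbm, mul_assoc _ C]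
  gcongr
  exact h r hr

lemma tailNorm_last {m : ℕ} (x : Fin (m + 1) → ℝ) : tailNorm m x = |x (Fin.last m)| := by
  rw [tailNorm, Fin.sum_univ_castSucc, ← Real.sqrt_sq_eq_abs]
  congr 1
  rw [Finset.sum_eq_zero fun j _ => if_neg (not_le.2 (by simp))]
  simp

lemma lintegral_last {m : ℕ} (G : ℝ → ℝ → ENNReal) (hG : Measurable (Function.uncurry G)) :
    ∫⁻ x : Fin (m + 1) → ℝ, G (∑ j, x j ^ 2) (x (Fin.last m)) =
      ∫⁻ y : Fin m → ℝ, ∫⁻ t : ℝ, G (∑ j, y j ^ 2 + t ^ 2) t := by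
  have he := (volume_preserving_piFinSuccAbove (fun _ : Fin (m + 1) => ℝ) (Fin.last m)).symm
  have hs : Measurable fun x : Fin (m + 1) → ℝ => ∑ j, x j ^ 2 :=
    Finset.measurable_sum _ fun j _ => (measurable_pi_apply j).pow_const 2
  have hm : Measurable fun x : Fin (m + 1) → ℝ => G (∑ j, x j ^ 2) (x (Fin.last m)) :=
    hG.comp (Measurable.prodMk hs (measurable_pi_apply _))
  rw [← he.lintegral_comp hm, Measure.volume_eq_prod, lintegral_prod_symm]
  · refine lintegral_congr fun y => lintegral_congr fun t => ?_
    simp [MeasurableEquiv.piFinSuccAbove, Fin.sum_univ_castSucc]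
  · exact (hm.comp he.measurable).aemeasurable

/-- The substitution `s = D t / r` in the last transverse coordinate. For `D = 0` both sides vanish. -/
lemma lintegral_slice (n : ℕ) (A D r : ℝ) (hD : 0 ≤ D) (hr : 0 < r) :
    ∫⁻ t : ℝ, {p : ℝ × ℝ | 0 < p.2 ∧ p.2 ≤ r ∧ p.1 ^ n ≤ (p.2 / r) ^ 2}.indicator 1
      (A + t ^ 2, D * |t|) = 2 * ENNReal.ofReal r *
        (ENNReal.ofReal D⁻¹ * sliceLen n A (r * D⁻¹)) := by
  have h0 := lintegral_comp_abs_eq (fun t => {p : ℝ × ℝ | 0 < p.2 ∧ p.2 ≤ r ∧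
    p.1 ^ n ≤ (p.2 / r) ^ 2}.indicator 1 (A + t ^ 2, D * t))
  simp only [sq_abs] at h0
  rw [h0, mul_assoc]
  congr 1
  rcases hD.eq_or_lt with rfl | hD
  · simp
  set T := {t : ℝ | 0 < t ∧ D * t ≤ r ∧ (A + t ^ 2) ^ n ≤ (D * t / r) ^ 2} with hT
  have hTm : MeasurableSet T := by
    simp only [hT, Set.ofPred_and]
    exact (measurableSet_lt (by fun_prop) (by fun_prop)).inter
      ((measurableSet_le (by fun_prop) (by fun_prop)).inter
        (measurableSet_le (by fun_prop) (by fun_prop)))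
  have h1 : ∫⁻ t in Set.Ioi (0 : ℝ), {p : ℝ × ℝ | 0 < p.2 ∧ p.2 ≤ r ∧
      p.1 ^ n ≤ (p.2 / r) ^ 2}.indicator (1 : ℝ × ℝ → ENNReal) (A + t ^ 2, D * t) = volume T := by
    rw [← lintegral_indicator_one hTm, ← lintegral_indicator measurableSet_Ioi]
    refine lintegral_congr fun t => ?_
    simp only [Set.indicator_apply, hT, Set.mem_ofPred_eq, Set.mem_Ioi, Pi.one_apply]
    by_cases ht : 0 < t
    · simp [ht, hD]
    · simp [ht]
  have h2 : T = (fun t => (D / r) * t) ⁻¹'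
      {s : ℝ | s ∈ Set.Ioc 0 1 ∧ (A + ((r * D⁻¹) * s) ^ 2) ^ n ≤ s ^ 2} := by
    ext t
    simp only [hT, Set.mem_ofPred_eq, Set.mem_preimage, Set.mem_Ioc]
    have e1 : r * D⁻¹ * (D / r * t) = t := by field_simp
    have e2 : D * t / r = D / r * t := by ring
    have e3 : 0 < D / r * t ↔ 0 < t := mul_pos_iff_of_pos_left (by positivity)
    have e4 : D / r * t ≤ 1 ↔ D * t ≤ r := by rw [← e2, div_le_one hr]
    rw [e1, e2, e3, e4, and_assoc]
  rw [h1, h2, Real.volume_preimage_mul_left (by positivity), sliceLen, ← mul_assoc,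
    ← ENNReal.ofReal_mul hr.le, inv_div, abs_of_pos (by positivity), div_eq_mul_inv]

lemma volume_region (K : ℕ) (r : ℝ) (hr : 0 < r) :
    volume {v : Fin (K + 2) → Fin (K + 2) → ℝ |
      0 < covol v ∧ covol v ≤ r ∧ nsq v ^ (K + 2) ≤ (covol v / r) ^ 2} =
      2 * ENNReal.ofReal r * Psi K r := by
  set P : Set (ℝ × ℝ) := {p : ℝ × ℝ | 0 < p.2 ∧ p.2 ≤ r ∧ p.1 ^ (K + 2) ≤ (p.2 / r) ^ 2} with hP
  have hPm : MeasurableSet P := by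
    simp only [hP, Set.ofPred_and]
    exact (measurableSet_lt (by fun_prop) (by fun_prop)).inter
      ((measurableSet_le (by fun_prop) (by fun_prop)).inter
        (measurableSet_le (by fun_prop) (by fun_prop)))
  have hvm : Measurable fun v : Fin (K + 2) → Fin (K + 2) → ℝ => (nsq v, covol v) :=
    continuous_nsq.measurable.prodMk continuous_covol.measurable
  have hFm : Measurable (P.indicator (1 : ℝ × ℝ → ENNReal)) := measurable_one.indicator hPm
  have h1 : volume {v : Fin (K + 2) → Fin (K + 2) → ℝ |
      0 < covol v ∧ covol v ≤ r ∧ nsq v ^ (K + 2) ≤ (covol v / r) ^ 2} =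
      ∫⁻ v : Fin (K + 2) → Fin (K + 2) → ℝ, (fun a b => P.indicator 1 (a, b)) (nsq v) (covol v) := by
    exact (lintegral_indicator_one (hvm hPm)).symm
  rw [h1, lintegral_step (k := K + 1) (fun a b => P.indicator 1 (a, b)) hFm, Psi,
    ← lintegral_const_mul' _ _ (ENNReal.mul_ne_top (by simp) ENNReal.ofReal_ne_top)]
  refine lintegral_congr fun v => ?_
  simp only [tailNorm_last]
  rw [lintegral_last (fun a t => P.indicator 1 (nsq v + a, covol v * |t|)),
    ← lintegral_const_mul' _ _ (ENNReal.mul_ne_top (by simp) ENNReal.ofReal_ne_top)]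
  swap
  · exact hFm.comp (by fun_prop)
  refine lintegral_congr fun y => ?_
  simp only [← add_assoc]
  exact lintegral_slice _ _ _ _ (covol_nonneg v) hr

/-! ### The cone measure on the special linear group -/

/-- Changing the sign of one row changes the sign of the determinant. -/
lemma det_of_update_neg {n : ℕ} (i : Fin n) (v : Fin n → Fin n → ℝ) :
    (of fun j => (if j = i then (-1 : ℝ) else 1) • v j).det = -(of v).det := by
  have h := det_mul_column (fun j => if j = i then (-1 : ℝ) else 1) (of v)
  rw [Finset.prod_ite_eq' Finset.univ i (fun _ => (-1 : ℝ))] at h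
  convert h using 2
  · ext j k
    by_cases hj : j = i <;> simp [hj]
  · simp

lemma continuous_det_of {n : ℕ} : Continuous fun v : Fin n → Fin n → ℝ => (of v).det :=
  Continuous.matrix_det (A := fun v : Fin n → Fin n → ℝ => of v) continuous_id

/-- By the reflection in one row, positive and negative determinants contribute equally. -/
lemma volume_abs_det {n : ℕ} (i : Fin n) {P : Set (ℝ × ℝ)} (hP : MeasurableSet P) :
    volume {v : Fin n → Fin n → ℝ | 0 < covol v ∧ (nsq v, covol v) ∈ P} =
      2 * volume {v : Fin n → Fin n → ℝ | 0 < (of v).det ∧ (nsq v, (of v).det) ∈ P} := by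
  have hd : Measurable fun v : Fin n → Fin n → ℝ => (of v).det := continuous_det_of.measurable
  have hN : Measurable (nsq : (Fin n → Fin n → ℝ) → ℝ) := continuous_nsq.measurable
  set Rp := {v : Fin n → Fin n → ℝ | 0 < (of v).det ∧ (nsq v, (of v).det) ∈ P} with hRp
  have hRpm : MeasurableSet Rp := by
    simp only [hRp, Set.ofPred_and]
    exact (measurableSet_lt measurable_const hd).inter ((hN.prodMk hd) hP)
  -- the reflection in row `i`
  set f : (Fin n → Fin n → ℝ) → (Fin n → Fin n → ℝ) :=
    fun v j => (if j = i then (-1 : ℝ) else 1) • v j with hf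
  have hfm : MeasurePreserving f := by
    refine volume_preserving_pi (f := fun j (x : Fin n → ℝ) => (if j = i then (-1 : ℝ) else 1) • x)
      fun j => ?_
    split_ifs
    · simpa using Measure.measurePreserving_neg (volume : Measure (Fin n → ℝ))
    · simp only [one_smul]
      exact MeasurePreserving.id _
  have hfd : ∀ v, (of (f v)).det = -(of v).det := det_of_update_neg i
  have hfn : ∀ v, nsq (f v) = nsq v := by
    intro v
    simp only [nsq, hf]
    refine Finset.sum_congr rfl fun j _ => Finset.sum_congr rfl fun l _ => ?_
    split_ifs <;> simp
  have hun : {v : Fin n → Fin n → ℝ | 0 < covol v ∧ (nsq v, covol v) ∈ P} = Rp ∪ f ⁻¹' Rp := by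
    ext v
    simp only [covol_square, Set.mem_union, Set.mem_preimage, hRp, Set.mem_ofPred_eq, hfd, hfn]
    rcases lt_trichotomy (of v).det 0 with h | h | h
    · simp [abs_of_neg h, h, h.le]
    · simp [h]
    · simp [abs_of_pos h, h, h.le]
  rw [hun, measure_union _ (hfm.measurable hRpm), hfm.measure_preimage hRpm.nullMeasurableSet,
    two_mul]
  refine Set.disjoint_left.2 fun v hv hv' => ?_
  have h1 : 0 < (of v).det := hv.1
  have h2 : 0 < (of (f v)).det := hv'.1
  rw [hfd] at h2
  linarith

section SpecialLinear

variable {n : ℕ}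

lemma sl_isInducing : Topology.IsInducing
    (fun g : Matrix.SpecialLinearGroup (Fin n) ℝ => (g : Matrix (Fin n) (Fin n) ℝ)) := ⟨rfl⟩

lemma sl_continuous_coe : Continuous (fun g : Matrix.SpecialLinearGroup (Fin n) ℝ => (g : Matrix (Fin n) (Fin n) ℝ)) :=
  sl_isInducing.continuous

lemma sl_isClosedEmbedding : Topology.IsClosedEmbedding
    (fun g : Matrix.SpecialLinearGroup (Fin n) ℝ => (g : Matrix (Fin n) (Fin n) ℝ)) := by
  refine ⟨⟨sl_isInducing, Subtype.val_injective⟩, ?_⟩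
  have : Set.range (fun g : Matrix.SpecialLinearGroup (Fin n) ℝ => (g : Matrix (Fin n) (Fin n) ℝ)) = {A | A.det = 1} :=
    Subtype.range_val
  rw [this]
  exact isClosed_eq (Continuous.matrix_det continuous_id) continuous_const

instance sl_isTopologicalGroup : IsTopologicalGroup (Matrix.SpecialLinearGroup (Fin n) ℝ) where
  continuous_mul := by
    rw [sl_isInducing.continuous_iff]
    exact Continuous.matrix_mul (sl_continuous_coe.comp continuous_fst)
      (sl_continuous_coe.comp continuous_snd)
  continuous_inv := by
    rw [sl_isInducing.continuous_iff]
    have : (fun g : Matrix.SpecialLinearGroup (Fin n) ℝ => (g : Matrix (Fin n) (Fin n) ℝ)) ∘ (fun g => g⁻¹) =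
      fun g : Matrix.SpecialLinearGroup (Fin n) ℝ => adjugate (g : Matrix (Fin n) (Fin n) ℝ) := by
      ext1 g; exact Matrix.SpecialLinearGroup.coe_inv g
    rw [this]
    exact Continuous.matrix_adjugate sl_continuous_coe

instance sl_t2Space : T2Space (Matrix.SpecialLinearGroup (Fin n) ℝ) := sl_isClosedEmbedding.isEmbedding.t2Space

instance sl_locallyCompactSpace : LocallyCompactSpace (Matrix.SpecialLinearGroup (Fin n) ℝ) := by
  have : LocallyCompactSpace (Matrix (Fin n) (Fin n) ℝ) :=
    inferInstanceAs (LocallyCompactSpace (Fin n → Fin n → ℝ))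
  exact sl_isClosedEmbedding.locallyCompactSpace

instance sl_secondCountable : SecondCountableTopology (Matrix.SpecialLinearGroup (Fin n) ℝ) := by
  have : SecondCountableTopology (Matrix (Fin n) (Fin n) ℝ) :=
    inferInstanceAs (SecondCountableTopology (Fin n → Fin n → ℝ))
  exact sl_isInducing.secondCountableTopology

lemma slProj_det (hn : n ≠ 0) {v : Fin n → Fin n → ℝ} (h : 0 < (of v).det) :
    (((of v).det ^ (-(n : ℝ)⁻¹)) • (of v)ᵀ).det = 1 := by
  rw [det_smul, det_transpose, Fintype.card_fin, ← Real.rpow_natCast, ← Real.rpow_mul h.le]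
  have : (n : ℝ) ≠ 0 := by exact_mod_cast hn
  rw [neg_mul, inv_mul_cancel₀ this, Real.rpow_neg_one, inv_mul_cancel₀ h.ne']

open Classical in
/-- The radial projection of tuples of positive determinant to `SL_n(ℝ)`, with the vectors of `v` as
columns; tuples of non-positive determinant are sent to `1`. -/
noncomputable def slProj (hn : n ≠ 0) (v : Fin n → Fin n → ℝ) : Matrix.SpecialLinearGroup (Fin n) ℝ :=
  if h : 0 < (of v).det then ⟨((of v).det ^ (-(n : ℝ)⁻¹)) • (of v)ᵀ, slProj_det hn h⟩ else 1

lemma slProj_coe (hn : n ≠ 0) {v : Fin n → Fin n → ℝ} (h : 0 < (of v).det) :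
    (slProj hn v : Matrix (Fin n) (Fin n) ℝ) = ((of v).det ^ (-(n : ℝ)⁻¹)) • (of v)ᵀ := by
  simp [slProj, h]

lemma isOpen_det_pos : IsOpen {v : Fin n → Fin n → ℝ | 0 < (of v).det} :=
  isOpen_lt continuous_const continuous_det_of

lemma continuousOn_slProj (hn : n ≠ 0) :
    ContinuousOn (slProj hn) {v : Fin n → Fin n → ℝ | 0 < (of v).det} := by
  rw [sl_isInducing.continuousOn_iff]
  have h : ContinuousOn (fun v : Fin n → Fin n → ℝ => ((of v).det ^ (-(n : ℝ)⁻¹)) • (of v)ᵀ)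
      {v : Fin n → Fin n → ℝ | 0 < (of v).det} := by
    have h1 : ContinuousOn (fun v : Fin n → Fin n → ℝ => (of v).det ^ (-(n : ℝ)⁻¹))
        {v : Fin n → Fin n → ℝ | 0 < (of v).det} :=
      ContinuousOn.rpow_const (f := fun v : Fin n → Fin n → ℝ => (of v).det)
        continuous_det_of.continuousOn fun v hv => Or.inl (ne_of_gt hv)
    have h2 : Continuous fun v : Fin n → Fin n → ℝ => (of v)ᵀ :=
      Continuous.matrix_transpose (A := fun v : Fin n → Fin n → ℝ => of v) continuous_id
    exact h1.smul h2.continuousOn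
  exact h.congr fun v hv => slProj_coe hn hv

/-- The tuples spanning a positively oriented parallelepiped of volume at most one. -/
def coneBase (n : ℕ) : Set (Fin n → Fin n → ℝ) := {v | 0 < (of v).det ∧ (of v).det ≤ 1}

lemma measurableSet_coneBase : MeasurableSet (coneBase n) := by
  simp only [coneBase, Set.ofPred_and]
  exact (measurableSet_lt measurable_const continuous_det_of.measurable).inter
    (measurableSet_le continuous_det_of.measurable measurable_const)

variable [MeasurableSpace (Matrix.SpecialLinearGroup (Fin n) ℝ)]
  [BorelSpace (Matrix.SpecialLinearGroup (Fin n) ℝ)]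

lemma measurable_slProj (hn : n ≠ 0) : Measurable (slProj (n := n) hn) := by
  classical
  have h := ContinuousOn.measurable_piecewise (continuousOn_slProj hn)
    (continuousOn_const (c := (1 : Matrix.SpecialLinearGroup (Fin n) ℝ))) isOpen_det_pos.measurableSet
  convert h using 1
  ext1 v
  by_cases hv : 0 < (of v).det
  · exact (Set.piecewise_eq_of_mem {v : Fin n → Fin n → ℝ | 0 < (of v).det} _ _ hv).symm
  · rw [Set.piecewise_eq_of_notMem {v : Fin n → Fin n → ℝ | 0 < (of v).det} _ _ hv]
    simp [slProj, hv]

/-- The cone measure on `SL_n(ℝ)`: the Lebesgue measure of the cone over a set, cut off at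
determinant one. -/
noncomputable def coneMeasure (hn : n ≠ 0) : Measure (Matrix.SpecialLinearGroup (Fin n) ℝ) :=
  Measure.map (slProj hn) (volume.restrict (coneBase n))

lemma coneMeasure_apply (hn : n ≠ 0) {s : Set (Matrix.SpecialLinearGroup (Fin n) ℝ)} (hs : MeasurableSet s) :
    coneMeasure hn s = volume (slProj hn ⁻¹' s ∩ coneBase n) := by
  rw [coneMeasure, Measure.map_apply (measurable_slProj hn) hs,
    Measure.restrict_apply (measurable_slProj hn hs)]

lemma coneMeasure_mul_left (hn : n ≠ 0) (g : Matrix.SpecialLinearGroup (Fin n) ℝ) :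
    Measure.map (g * ·) (coneMeasure hn) = coneMeasure hn := by
  -- left multiplication by `g`, acting on each column separately
  set A : (Fin n → Fin n → ℝ) → (Fin n → Fin n → ℝ) :=
    fun v j => toLin' (g : Matrix (Fin n) (Fin n) ℝ) (v j) with hA
  have hAm : MeasurePreserving A := by
    refine volume_preserving_pi fun j => ⟨?_, ?_⟩
    · exact (LinearMap.continuous_of_finiteDimensional _).measurable
    · rw [Real.map_matrix_volume_pi_eq_smul_volume_pi (by simp)]
      simp
  have hAt : ∀ v, (of (A v))ᵀ = (g : Matrix (Fin n) (Fin n) ℝ) * (of v)ᵀ := by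
    intro v
    ext i j
    simp [hA, mulVec, dotProduct, Matrix.mul_apply]
  have hAd : ∀ v, (of (A v)).det = (of v).det := by
    intro v
    rw [← det_transpose, hAt, det_mul, det_transpose, g.det_coe, one_mul]
  have hpre : A ⁻¹' coneBase n = coneBase n := by
    ext v; simp only [coneBase, Set.mem_preimage, Set.mem_ofPred_eq, hAd]
  have hAr : MeasurePreserving A (volume.restrict (coneBase n)) (volume.restrict (coneBase n)) := by
    have := hAm.restrict_preimage (measurableSet_coneBase (n := n))
    rwa [hpre] at this
  have hmul : Measurable (fun x : Matrix.SpecialLinearGroup (Fin n) ℝ => g * x) := (continuous_const_mul g).measurable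
  rw [coneMeasure, Measure.map_map hmul (measurable_slProj hn)]
  conv_rhs => rw [← hAr.map_eq, Measure.map_map (measurable_slProj hn) hAr.measurable]
  refine Measure.map_congr ?_
  filter_upwards [ae_restrict_mem (measurableSet_coneBase (n := n))] with v hv
  have hv0 : 0 < (of v).det := hv.1
  have hv1 : 0 < (of (A v)).det := by rw [hAd]; exact hv0
  refine Subtype.ext ?_
  change ((g * slProj hn v : Matrix.SpecialLinearGroup (Fin n) ℝ) : Matrix (Fin n) (Fin n) ℝ) =
    (slProj hn (A v) : Matrix (Fin n) (Fin n) ℝ)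
  rw [slProj_coe hn hv1, Matrix.SpecialLinearGroup.coe_mul, slProj_coe hn hv0, hAt, hAd, Matrix.mul_smul]

lemma coneMeasure_isHaar (hn : n ≠ 0) : (coneMeasure (n := n) hn).IsHaarMeasure where
  lt_top_of_isCompact := by
    intro K hK
    rw [coneMeasure_apply hn hK.measurableSet]
    obtain ⟨R, hR⟩ := hK.exists_bound_of_continuousOn
      (f := fun g : Matrix.SpecialLinearGroup (Fin n) ℝ => (fun i j => g.1 i j : Fin n → Fin n → ℝ)) (by
        exact sl_continuous_coe.continuousOn)
    refine lt_of_le_of_lt (measure_mono ?_)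
      (isCompact_Icc (a := fun _ _ : Fin n => (-R : ℝ)) (b := fun _ _ => R)).measure_lt_top
    rintro v ⟨hvK, hv0, hv1⟩
    have hb : ∀ j i, |v j i| ≤ R := by
      intro j i
      have h1 : |(slProj hn v).1 i j| ≤ R := by
        refine le_trans ?_ (hR _ hvK)
        exact (norm_le_pi_norm (fun j => (slProj hn v).1 i j) j).trans
          (norm_le_pi_norm (fun i j => (slProj hn v).1 i j) i)
      have h2 := slProj_coe hn hv0
      have h3 : (slProj hn v).1 i j = (of v).det ^ (-(n : ℝ)⁻¹) * v j i := by
        rw [h2]; simp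
      rw [h3, abs_mul] at h1
      refine le_trans ?_ h1
      refine le_mul_of_one_le_left (abs_nonneg _) ?_
      refine le_trans ?_ (le_abs_self _)
      exact Real.one_le_rpow_of_pos_of_le_one_of_nonpos hv0 hv1 (by
        rw [neg_nonpos]; positivity)
    exact ⟨fun j i => (abs_le.1 (hb j i)).1, fun j i => (abs_le.1 (hb j i)).2⟩
  map_mul_left_eq_self := coneMeasure_mul_left hn
  open_pos := by
    rintro U hU ⟨g, hg⟩
    rw [coneMeasure_apply hn hU.measurableSet]
    set O := {v : Fin n → Fin n → ℝ | 0 < (of v).det} ∩ slProj hn ⁻¹' U with hO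
    have hOo : IsOpen O := (continuousOn_slProj hn).isOpen_inter_preimage isOpen_det_pos hU
    have hO2 : IsOpen (O ∩ {v : Fin n → Fin n → ℝ | (of v).det < 1}) :=
      hOo.inter (isOpen_lt continuous_det_of continuous_const)
    have hne : (O ∩ {v : Fin n → Fin n → ℝ | (of v).det < 1}).Nonempty := by
      -- the factor `1 / 2` moves the tuple of `g` off the boundary `det = 1` of the cone
      refine ⟨fun j i => (1 / 2 : ℝ) * g.1 i j, ?_⟩
      have ht : (of fun j i => (1 / 2 : ℝ) * g.1 i j) = (1 / 2 : ℝ) • (g.1)ᵀ := by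
        ext i j; simp
      have hd : (of fun j i => (1 / 2 : ℝ) * g.1 i j).det = (1 / 2 : ℝ) ^ n := by
        rw [ht, det_smul, det_transpose, Fintype.card_fin]
        have : g.1.det = 1 := g.2
        rw [this, mul_one]
      have hpos : 0 < (of fun j i => (1 / 2 : ℝ) * g.1 i j).det := by rw [hd]; positivity
      refine ⟨⟨hpos, ?_⟩, ?_⟩
      · have : slProj hn (fun j i => (1 / 2 : ℝ) * g.1 i j) = g := by
          refine Subtype.ext ?_
          rw [slProj_coe hn hpos, hd, ht, ← Real.rpow_natCast, ← Real.rpow_mul (by norm_num)]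
          have h0 : (n : ℝ) ≠ 0 := by exact_mod_cast hn
          rw [mul_neg, mul_inv_cancel₀ h0, transpose_smul, transpose_transpose, smul_smul]
          norm_num
        rw [Set.mem_preimage, this]; exact hg
      · simp only [Set.mem_ofPred_eq]
        rw [hd]
        exact pow_lt_one₀ (by norm_num) (by norm_num) hn
    refine ne_of_gt ((hO2.measure_pos volume hne).trans_le (measure_mono ?_))
    rintro v ⟨⟨h1, h2⟩, h3⟩
    exact ⟨h2, h1, le_of_lt h3⟩

end SpecialLinear

/-! ### The asymptotic -/

/-- The condition `‖v‖ / det v ^ (1/n) ≤ T` cleared of roots. -/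
lemma frobNorm_slProj_le_iff {n : ℕ} (hn : n ≠ 0) {T : ℝ} (hT : 0 < T) {v : Fin n → Fin n → ℝ}
    (h : 0 < (of v).det) :
    frobNorm (slProj hn v : Matrix (Fin n) (Fin n) ℝ) ≤ T ↔
      nsq v ^ n ≤ (T ^ n * (of v).det) ^ 2 := by
  set d := (of v).det with hd
  set s : ℝ := d ^ (-(n : ℝ)⁻¹) with hs
  have hs0 : 0 < s := Real.rpow_pos_of_pos h _
  have hsn : s ^ n = d⁻¹ := by
    have : (n : ℝ) ≠ 0 := by exact_mod_cast hn
    rw [hs, ← Real.rpow_natCast, ← Real.rpow_mul h.le, neg_mul, inv_mul_cancel₀ this,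
      Real.rpow_neg_one]
  have hsum : ∑ i, ∑ j, ((slProj hn v : Matrix (Fin n) (Fin n) ℝ) i j) ^ 2 = s ^ 2 * nsq v := by
    rw [slProj_coe hn h, Finset.sum_comm, nsq, Finset.mul_sum]
    refine Finset.sum_congr rfl fun i _ => ?_
    rw [Finset.mul_sum]
    refine Finset.sum_congr rfl fun j _ => ?_
    simp [hs, hd, mul_pow]
  rw [frobNorm, hsum, Real.sqrt_le_left hT.le,
    ← pow_le_pow_iff_left₀ (mul_nonneg (sq_nonneg s) (nsq_nonneg v)) (sq_nonneg T) hn,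
    mul_pow, ← pow_mul, mul_comm 2 n, pow_mul, hsn, ← pow_mul, mul_comm 2 n, pow_mul, mul_pow,
    inv_pow, inv_mul_le_iff₀ (by positivity), mul_comm (d ^ 2)]

lemma measurableSet_frobBall {n : ℕ} [MeasurableSpace (Matrix.SpecialLinearGroup (Fin n) ℝ)]
    [BorelSpace (Matrix.SpecialLinearGroup (Fin n) ℝ)] (T : ℝ) :
    MeasurableSet {g : Matrix.SpecialLinearGroup (Fin n) ℝ |
      frobNorm (g : Matrix (Fin n) (Fin n) ℝ) ≤ T} ∧
    IsOpen {g : Matrix.SpecialLinearGroup (Fin n) ℝ |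
      frobNorm (g : Matrix (Fin n) (Fin n) ℝ) < T} := by
  have hc : Continuous fun g : Matrix.SpecialLinearGroup (Fin n) ℝ =>
      frobNorm (g : Matrix (Fin n) (Fin n) ℝ) := by
    unfold frobNorm
    refine Real.continuous_sqrt.comp (continuous_finsetSum _ fun i _ =>
      continuous_finsetSum _ fun j _ => ?_)
    exact (sl_continuous_coe.matrix_elem i j).pow 2
  exact ⟨(isClosed_le hc continuous_const).measurableSet, isOpen_lt hc continuous_const⟩

/-- The measure of the ball is an exact power of `T` times the profile at `T ^ (-n)`. -/
lemma coneMeasure_frobBall {K : ℕ} (hn : K + 2 ≠ 0)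
    [MeasurableSpace (Matrix.SpecialLinearGroup (Fin (K + 2)) ℝ)]
    [BorelSpace (Matrix.SpecialLinearGroup (Fin (K + 2)) ℝ)] {T : ℝ} (hT : 0 < T) :
    coneMeasure hn {g : Matrix.SpecialLinearGroup (Fin (K + 2)) ℝ |
      frobNorm (g : Matrix (Fin (K + 2)) (Fin (K + 2)) ℝ) ≤ T} =
      ENNReal.ofReal (T ^ ((K + 2) * (K + 1))) * Psi K (T ^ (K + 2))⁻¹ := by
  set r : ℝ := (T ^ (K + 2))⁻¹ with hr
  have hr0 : 0 < r := by positivity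
  set P : Set (ℝ × ℝ) := {p | p.2 ≤ r ∧ p.1 ^ (K + 2) ≤ (p.2 / r) ^ 2} with hP
  have hPm : MeasurableSet P := by
    simp only [hP, Set.ofPred_and]
    exact (measurableSet_le (by fun_prop) (by fun_prop)).inter
      (measurableSet_le (by fun_prop) (by fun_prop))
  set R := {v : Fin (K + 2) → Fin (K + 2) → ℝ | 0 < (of v).det ∧ (nsq v, (of v).det) ∈ P} with hR
  have hvol : volume R = ENNReal.ofReal r * Psi K r := by
    have h1 := volume_abs_det (0 : Fin (K + 2)) hPm
    have h2 := volume_region K r hr0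
    have h3 : (2 : ENNReal) * volume R = 2 * (ENNReal.ofReal r * Psi K r) := by
      rw [← h1, ← mul_assoc, ← h2]; rfl
    exact (ENNReal.mul_right_inj (by simp) (by simp)).1 h3
  have hset : slProj hn ⁻¹' {g : Matrix.SpecialLinearGroup (Fin (K + 2)) ℝ |
      frobNorm (g : Matrix (Fin (K + 2)) (Fin (K + 2)) ℝ) ≤ T} ∩ coneBase (K + 2) =
      (fun v => T⁻¹ • v) ⁻¹' R := by
    ext v
    have hdet : (of (T⁻¹ • v)).det = r * (of v).det := by
      have : of (T⁻¹ • v) = T⁻¹ • of v := rfl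
      rw [this, det_smul, Fintype.card_fin, hr, inv_pow]
    have hns : nsq (T⁻¹ • v) = T⁻¹ ^ 2 * nsq v := by
      simp [nsq, mul_pow, Finset.mul_sum]
    have hns2 : nsq (T⁻¹ • v) ^ (K + 2) = r ^ 2 * nsq v ^ (K + 2) := by
      rw [hns, mul_pow, ← pow_mul, mul_comm 2, pow_mul, inv_pow, hr]
    simp only [Set.mem_inter_iff, Set.mem_preimage, Set.mem_ofPred_eq, coneBase, hR, hP, hdet,
      hns2, mul_pos_iff_of_pos_left hr0]
    rw [mul_div_cancel_left₀ _ hr0.ne', mul_le_iff_le_one_right hr0]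
    have key : r ^ 2 * nsq v ^ (K + 2) ≤ (of v).det ^ 2 ↔
        nsq v ^ (K + 2) ≤ (T ^ (K + 2) * (of v).det) ^ 2 := by
      rw [hr, inv_pow, inv_mul_le_iff₀ (by positivity), mul_pow]
    rw [key]
    constructor
    · rintro ⟨h1, h2, h3⟩
      exact ⟨h2, h3, (frobNorm_slProj_le_iff hn hT h2).1 h1⟩
    · rintro ⟨h1, h2, h3⟩
      exact ⟨(frobNorm_slProj_le_iff hn hT h1).2 h3, h1, h2⟩
  have hfin : Module.finrank ℝ (Fin (K + 2) → Fin (K + 2) → ℝ) = (K + 2) * (K + 2) := by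
    simp [Module.finrank_pi_fintype]
  rw [coneMeasure_apply hn (measurableSet_frobBall T).1, hset,
    Measure.addHaar_preimage_smul volume (inv_ne_zero hT.ne'), hvol, hfin, ← mul_assoc,
    ← ENNReal.ofReal_mul (abs_nonneg _)]
  congr 2
  rw [inv_pow, inv_inv, abs_of_nonneg (by positivity), hr, ← div_eq_mul_inv,
    div_eq_iff (by positivity), ← pow_add]
  congr 1

lemma Psi_zero_lt_top (K : ℕ) : Psi K 0 < ⊤ := by
  obtain ⟨C, hC, h⟩ := Psi_zero_le K
  refine (h 1 one_pos).trans_lt (ENNReal.add_lt_top.2 ⟨?_, by simpa using hC⟩)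
  have h1 := volume_region K 1 one_pos
  have h2 : 2 * ENNReal.ofReal 1 * Psi K 1 < ⊤ := by
    rw [← h1]
    refine lt_of_le_of_lt (measure_mono ?_)
      (isCompact_Icc (a := fun _ _ : Fin (K + 2) => (-1 : ℝ)) (b := fun _ _ => 1)).measure_lt_top
    rintro v ⟨h0, hle, hv⟩
    have hN : nsq v ≤ 1 := by
      by_contra! hcon
      have h3 : 1 < nsq v ^ (K + 2) := one_lt_pow₀ hcon (by simp)
      have h4 : (covol v / 1) ^ 2 ≤ 1 := by
        rw [div_one]; exact pow_le_one₀ h0.le hle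
      linarith
    have hb : ∀ i j, |v i j| ≤ 1 := by
      intro i j
      rw [← sq_le_one_iff_abs_le_one]
      refine le_trans ?_ hN
      refine le_trans ?_ (Finset.single_le_sum (f := fun i => ∑ j, v i j ^ 2)
        (fun i _ => by positivity) (Finset.mem_univ i))
      exact Finset.single_le_sum (f := fun j => v i j ^ 2)
        (fun i _ => by positivity) (Finset.mem_univ j)
    exact ⟨fun i j => (abs_le.1 (hb i j)).1, fun i j => (abs_le.1 (hb i j)).2⟩
  rw [lt_top_iff_ne_top] at h2 ⊢
  intro h3
  apply h2
  rw [h3]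
  simp

/-- Positivity is inherited from the Haar property: some ball has an open neighbourhood of `1` inside. -/
lemma Psi_zero_pos (K : ℕ) : 0 < Psi K 0 := by
  have hn : K + 2 ≠ 0 := by simp
  let _ : MeasurableSpace (Matrix.SpecialLinearGroup (Fin (K + 2)) ℝ) := borel _
  have _ : BorelSpace (Matrix.SpecialLinearGroup (Fin (K + 2)) ℝ) := ⟨rfl⟩
  have hH := coneMeasure_isHaar hn
  set T := frobNorm ((1 : Matrix.SpecialLinearGroup (Fin (K + 2)) ℝ) :
    Matrix (Fin (K + 2)) (Fin (K + 2)) ℝ) + 1 with hT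
  have hT0 : 0 < T := add_pos_of_nonneg_of_pos (Real.sqrt_nonneg _) one_pos
  have h1 : 0 < coneMeasure hn {g : Matrix.SpecialLinearGroup (Fin (K + 2)) ℝ |
      frobNorm (g : Matrix (Fin (K + 2)) (Fin (K + 2)) ℝ) < T} :=
    (measurableSet_frobBall T).2.measure_pos _ ⟨1, by
      rw [Set.mem_ofPred_eq, hT]; exact lt_add_one _⟩
  have h2 := h1.trans_le (measure_mono (t := {g : Matrix.SpecialLinearGroup (Fin (K + 2)) ℝ |
      frobNorm (g : Matrix (Fin (K + 2)) (Fin (K + 2)) ℝ) ≤ T}) fun g hg => (le_of_lt hg.out : _ ≤ T))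
  rw [coneMeasure_frobBall hn hT0] at h2
  exact (ENNReal.mul_pos_iff.1 h2).2.trans_le (Psi_le K _)

theorem statement19 (n : ℕ) (hn : 2 ≤ n)
    [MeasurableSpace (Matrix.SpecialLinearGroup (Fin n) ℝ)]
    [BorelSpace (Matrix.SpecialLinearGroup (Fin n) ℝ)]
    (μ : Measure (Matrix.SpecialLinearGroup (Fin n) ℝ)) (hμ : μ.IsHaarMeasure) :
    ∃ c : ℝ, 0 < c ∧ ∃ C : ℝ, 0 < C ∧ ∀ T : ℝ, 1 ≤ T →
      |(μ {g : Matrix.SpecialLinearGroup (Fin n) ℝ |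
          frobNorm (g : Matrix (Fin n) (Fin n) ℝ) ≤ T}).toReal -
          c * T ^ (n * (n - 1))| ≤ C * T ^ (n * (n - 2)) := by
  obtain ⟨K, rfl⟩ : ∃ K, n = K + 2 := ⟨n - 2, by omega⟩
  have hn0 : K + 2 ≠ 0 := by simp
  have hH := coneMeasure_isHaar hn0
  have huniq := Measure.isMulLeftInvariant_eq_smul μ (coneMeasure hn0)
  have ha := Measure.haarScalarFactor_pos_of_isHaarMeasure μ (coneMeasure hn0)
  set a := Measure.haarScalarFactor μ (coneMeasure hn0)
  obtain ⟨C, hC, hPC⟩ := Psi_zero_le K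
  have ha' : (0 : ℝ) < a := by exact_mod_cast ha
  have h0 := Psi_zero_lt_top K
  refine ⟨a * (Psi K 0).toReal, mul_pos ha' (ENNReal.toReal_pos (Psi_zero_pos K).ne' h0.ne),
    a * C.toReal + 1, by positivity, fun T hT => ?_⟩
  have hT0 : 0 < T := by linarith
  set r : ℝ := (T ^ (K + 2))⁻¹ with hr
  have hr0 : 0 < r := by positivity
  have hval : (μ {g : Matrix.SpecialLinearGroup (Fin (K + 2)) ℝ |
      frobNorm (g : Matrix (Fin (K + 2)) (Fin (K + 2)) ℝ) ≤ T}).toReal =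
      a * (T ^ ((K + 2) * (K + 1)) * (Psi K r).toReal) := by
    rw [huniq, Measure.smul_apply, coneMeasure_frobBall hn0 hT0, ENNReal.smul_def, smul_eq_mul,
      ENNReal.toReal_mul, ENNReal.toReal_mul, ENNReal.toReal_ofReal (by positivity)]
    rfl
  have hle : (Psi K r).toReal ≤ (Psi K 0).toReal := ENNReal.toReal_mono h0.ne (Psi_le K r)
  have hge : (Psi K 0).toReal ≤ (Psi K r).toReal + C.toReal * r := by
    have hr1 : Psi K r ≠ ⊤ := ((Psi_le K r).trans_lt h0).ne
    have hr2 : C * ENNReal.ofReal r ≠ ⊤ := ENNReal.mul_ne_top hC.ne ENNReal.ofReal_ne_top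
    have := ENNReal.toReal_mono (ENNReal.add_ne_top.2 ⟨hr1, hr2⟩) (hPC r hr0)
    rwa [ENNReal.toReal_add hr1 hr2, ENNReal.toReal_mul, ENNReal.toReal_ofReal hr0.le] at this
  have hpow : T ^ ((K + 2) * (K + 1)) * r = T ^ ((K + 2) * K) := by
    rw [hr, ← div_eq_mul_inv, div_eq_iff (by positivity), ← pow_add]
    congr 1
  have e1 : K + 2 - 1 = K + 1 := rfl
  have e2 : K + 2 - 2 = K := rfl
  rw [hval, e1, e2, ← hpow]
  set N := T ^ ((K + 2) * (K + 1))
  have hN : 0 < N := by positivity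
  have e3 : a * (N * (Psi K r).toReal) - a * (Psi K 0).toReal * N =
      -(a * N * ((Psi K 0).toReal - (Psi K r).toReal)) := by ring
  rw [e3, abs_neg, abs_of_nonneg (mul_nonneg (by positivity) (by linarith))]
  calc a * N * ((Psi K 0).toReal - (Psi K r).toReal) ≤ a * N * (C.toReal * r) := by
        gcongr; linarith
    _ ≤ (a * C.toReal + 1) * (N * r) := by
        have : 0 ≤ N * r := by positivity
        nlinarith
end
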